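/- arXiv:1403.7033 — 3 statements merged into one kernel-verified Lean document; each statement's English description precedes it below -/
import Mathlib

section
/- Let m ≥ 2, N ≥ 1, let Λ be a subset of {α ∈ ℕ₀^N : |α| = m}, and let (c_α)_{α∈Λ} be complex numbers. Then (∑_{α∈Λ} (|c_α| / √(α+1))^{2m/(m+1)})^{(m+1)/(2m)} ≤ m^{(m-1)/(2m)} · (m/(m-1))^{m-1} · sup_{z ∈ closed unit polydisc of ℂ^N} |∑_{α∈Λ} c_α z^α|. -/
open Finset

/-!
Put `w_α = |c_α| / √(α + 1)` and `P = ∑ c_α z^α`. A polynomial in one variable factors as `p = FH`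
with `|F| = |H| = |p|^{1/2}` on the unit circle, so Cauchy-Schwarz on the coefficients of the
product and Parseval for `F` and `H` give Carleman's contractive inequality between the Bergman norm
`(∑ |p_k|² / (k + 1))^{1/2}` and the `H¹` norm. Minkowski's inequality propagates it from one
variable to the polydisc (Helson), and applied to `∂ₙP` it yields
`∑ w_α² α_n ≤ ‖∂ₙP‖₁² / 2` for each direction `n`.

A Blei-type argument merges the directions: with `A_n` bounding `(∑ w_α² α_n)^{1/2}`, Hölder's
inequality against the weights `∏ A_n^{α_n / m}`, the weighted AM-GM inequality and the multinomial
theorem bound the `ℓ^{2m/(m+1)}` norm of `w` by `m^{-1/2} ∑ A_n`. Finally `∑ |∂ₙP|` at a point of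
the polydisc is a single directional derivative, which Cauchy's estimate on a disc of radius
`1 / (m - 1)` bounds by `m (m / (m - 1))^{m - 1} sup |P|`.
-/

section PowerSeries

open PowerSeries
open scoped Polynomial

variable {𝕜 : Type*} [NormedField 𝕜]

/-- Absolute summability of the coefficients of a power series: membership in the Wiener algebra of
the closed unit disc. -/
def AbsSummable (φ : 𝕜⟦X⟧) : Prop :=
  Summable fun n => ‖coeff n φ‖

/-- The sum of a power series at `z`; for `AbsSummable` series it converges on the closed unit
disc, while a divergent series is sent to `0`. -/
noncomputable def discEval (φ : 𝕜⟦X⟧) (z : 𝕜) : 𝕜 :=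
  ∑' n, coeff n φ * z ^ n

namespace AbsSummable

variable {φ ψ : 𝕜⟦X⟧} {z : 𝕜}

lemma coe_polynomial (p : 𝕜[X]) : AbsSummable (p : 𝕜⟦X⟧) :=
  summable_of_ne_finset_zero (s := p.support) fun n hn => by
    rw [Polynomial.coeff_coe, Polynomial.notMem_support_iff.mp hn, norm_zero]

lemma summable_norm_mul_pow (hφ : AbsSummable φ) (hz : ‖z‖ ≤ 1) :
    Summable fun n => ‖coeff n φ * z ^ n‖ :=
  hφ.of_nonneg_of_le (fun _ => norm_nonneg _) fun n => by
    rw [norm_mul, norm_pow]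
    exact mul_le_of_le_one_right (norm_nonneg _) (pow_le_one₀ (norm_nonneg _) hz)

lemma mul [CompleteSpace 𝕜] (hφ : AbsSummable φ) (hψ : AbsSummable ψ) : AbsSummable (φ * ψ) := by
  simpa only [AbsSummable, coeff_mul] using
    summable_norm_sum_mul_antidiagonal_of_summable_norm hφ hψ

lemma discEval_mul [CompleteSpace 𝕜] (hφ : AbsSummable φ) (hψ : AbsSummable ψ) (hz : ‖z‖ ≤ 1) :
    discEval (φ * ψ) z = discEval φ z * discEval ψ z := by
  rw [discEval, discEval, discEval, tsum_mul_tsum_eq_tsum_sum_antidiagonal_of_summable_norm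
    (hφ.summable_norm_mul_pow hz) (hψ.summable_norm_mul_pow hz)]
  refine tsum_congr fun n => ?_
  rw [coeff_mul, sum_mul]
  refine sum_congr rfl fun kl hkl => ?_
  rw [← mem_antidiagonal.mp hkl, pow_add]
  ring

end AbsSummable

lemma discEval_coe_polynomial (p : 𝕜[X]) (z : 𝕜) : discEval (p : 𝕜⟦X⟧) z = p.eval z := by
  simp only [discEval, Polynomial.coeff_coe]
  rw [Polynomial.eval_eq_sum, Polynomial.sum, tsum_eq_sum fun n hn => ?_]
  rw [Polynomial.notMem_support_iff.mp hn, zero_mul]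

lemma catalan_div_four_pow (n : ℕ) :
    (catalan n : ℝ) / 4 ^ n =
      2 * (n.centralBinom / 4 ^ n - (n + 1).centralBinom / 4 ^ (n + 1)) := by
  have hcat : ((n : ℝ) + 1) * catalan n = n.centralBinom :=
    mod_cast succ_mul_catalan_eq_centralBinom n
  have hbinom : ((n : ℝ) + 1) * (n + 1).centralBinom = 2 * (2 * n + 1) * n.centralBinom :=
    mod_cast n.succ_mul_centralBinom_succ
  have hsucc : ((n + 1).centralBinom : ℝ) = 2 * (2 * n + 1) * catalan n := by
    apply mul_left_cancel₀ (Nat.cast_add_one_ne_zero n : (n : ℝ) + 1 ≠ 0)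
    rw [hbinom, ← hcat]
    ring
  rw [hsucc, ← hcat]
  field_simp
  ring

lemma summable_catalan_div_four_pow : Summable fun n => (catalan n : ℝ) / 4 ^ n := by
  refine summable_of_sum_range_le (c := 2) (fun n => by positivity) fun n => ?_
  have hnonneg : (0 : ℝ) ≤ n.centralBinom / 4 ^ n := by positivity
  simp only [catalan_div_four_pow, ← mul_sum]
  rw [sum_range_sub', Nat.centralBinom_zero, Nat.cast_one, pow_zero, div_one]
  linarith

/-- The power series `√(1 - wX)`, obtained from `√(1 - 4X) = 1 - 2X C(X)` with `C` the Catalan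
generating function. -/
noncomputable def sqrtOneSub (w : ℂ) : ℂ⟦X⟧ :=
  rescale (w / 4) (1 - 2 * (X * catalanSeries.map (Nat.castRingHom ℂ)))

lemma sqrtOneSub_mul_self (w : ℂ) : sqrtOneSub w * sqrtOneSub w = 1 - C w * X := by
  set K := catalanSeries.map (Nat.castRingHom ℂ) with hK
  have hcat : K ^ 2 * X + 1 = K := by
    simpa using congrArg (PowerSeries.map (Nat.castRingHom ℂ)) catalanSeries_sq_mul_X_add_one
  have hsq : (1 - 2 * (X * K)) * (1 - 2 * (X * K)) = 1 - 4 * X := by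
    linear_combination 4 * X * hcat
  rw [sqrtOneSub, ← hK, ← map_mul, hsq, map_sub, map_one, map_mul, map_ofNat, rescale_X,
    show (4 : ℂ⟦X⟧) = C 4 from (map_ofNat C 4).symm, ← mul_assoc, ← map_mul,
    mul_div_cancel₀ w (by norm_num)]

lemma coeff_succ_sqrtOneSub (w : ℂ) (n : ℕ) :
    coeff (n + 1) (sqrtOneSub w) = -(w ^ (n + 1) / 2 * (catalan n / 4 ^ n)) := by
  rw [sqrtOneSub, coeff_rescale, map_sub, coeff_one, if_neg n.succ_ne_zero,
    show (2 : ℂ⟦X⟧) = C 2 from (map_ofNat _ 2).symm, coeff_C_mul, coeff_succ_X_mul,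
    PowerSeries.coeff_map, catalanSeries_coeff, Nat.coe_castRingHom, div_pow, pow_succ 4]
  ring

lemma absSummable_sqrtOneSub {w : ℂ} (hw : ‖w‖ ≤ 1) : AbsSummable (sqrtOneSub w) := by
  rw [AbsSummable, ← summable_nat_add_iff 1]
  refine summable_catalan_div_four_pow.of_nonneg_of_le (fun _ => norm_nonneg _) fun n => ?_
  have hhalf : ‖w ^ (n + 1) / 2‖ ≤ 1 := by
    rw [norm_div, norm_pow, RCLike.norm_ofNat]
    linarith [pow_le_one₀ (n := n + 1) (norm_nonneg w) hw]
  rw [coeff_succ_sqrtOneSub, norm_neg, norm_mul]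
  refine (mul_le_of_le_one_left (norm_nonneg _) hhalf).trans_eq ?_
  rw [norm_div, norm_pow, RCLike.norm_natCast, RCLike.norm_ofNat]

/-- A balanced factorization of a polynomial: two absolutely summable power series with product `p`
and the same modulus on the unit circle. It replaces the factorization of an `H¹` function into two
`H²` functions of equal modulus. -/
def HasBalancedFactorization (p : ℂ[X]) : Prop :=
  ∃ F H : ℂ⟦X⟧, AbsSummable F ∧ AbsSummable H ∧ F * H = p ∧
    ∀ z : ℂ, ‖z‖ = 1 → ‖discEval F z‖ = ‖discEval H z‖

lemma absSummable_geometric {w : ℂ} (hw : ‖w‖ < 1) : AbsSummable (rescale w (mk 1)) := by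
  simpa [AbsSummable] using summable_geometric_of_lt_one (norm_nonneg w) hw

lemma geometric_mul_one_sub (w : ℂ) : rescale w (mk 1) * (1 - C w * X) = 1 := by
  simpa using congrArg (rescale w) (mk_one_mul_one_sub_eq_one ℂ)

lemma norm_one_sub_conj_mul {a z : ℂ} (hz : ‖z‖ = 1) :
    ‖1 - starRingEnd ℂ a * z‖ = ‖z - a‖ := by
  have hconj : starRingEnd ℂ z * z = 1 := by
    rw [mul_comm, Complex.mul_conj, Complex.normSq_eq_norm_sq, hz, one_pow, Complex.ofReal_one]
  rw [← hconj, ← sub_mul, ← map_sub, norm_mul, hz, mul_one, Complex.norm_conj]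

namespace HasBalancedFactorization

lemma mul {p q : ℂ[X]} (hp : HasBalancedFactorization p) (hq : HasBalancedFactorization q) :
    HasBalancedFactorization (p * q) := by
  obtain ⟨F, H, hF, hH, hFH, hnorm⟩ := hp
  obtain ⟨F', H', hF', hH', hFH', hnorm'⟩ := hq
  refine ⟨F * F', H * H', hF.mul hF', hH.mul hH', ?_, fun z hz => ?_⟩
  · rw [mul_mul_mul_comm, hFH, hFH', Polynomial.coe_mul]
  · rw [hF.discEval_mul hF' hz.le, hH.discEval_mul hH' hz.le, norm_mul, norm_mul, hnorm z hz,
      hnorm' z hz]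

lemma const (a : ℂ) : HasBalancedFactorization (Polynomial.C a) := by
  obtain ⟨b, rfl⟩ := IsAlgClosed.exists_eq_mul_self a
  exact ⟨_, _, .coe_polynomial (.C b), .coe_polynomial (.C b),
    by rw [← Polynomial.coe_mul, ← map_mul], fun _ _ => rfl⟩

lemma one_sub_C_mul_X {w : ℂ} (hw : ‖w‖ ≤ 1) :
    HasBalancedFactorization (1 - Polynomial.C w * Polynomial.X) :=
  ⟨_, _, absSummable_sqrtOneSub hw, absSummable_sqrtOneSub hw,
    by simpa using sqrtOneSub_mul_self w, fun _ _ => rfl⟩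

lemma X_sub_C_of_one_le_norm {a : ℂ} (ha : 1 ≤ ‖a‖) :
    HasBalancedFactorization (Polynomial.X - Polynomial.C a) := by
  have ha0 : a ≠ 0 := norm_pos_iff.mp (one_pos.trans_le ha)
  have hinv : ‖a⁻¹‖ ≤ 1 := by
    rw [norm_inv]
    exact inv_le_one_of_one_le₀ ha
  convert (const (-a)).mul (one_sub_C_mul_X hinv) using 1
  rw [mul_sub, ← mul_assoc, ← map_mul, neg_mul, mul_inv_cancel₀ ha0, map_neg, map_neg, map_one]
  ring

-- The Blaschke factor `(X - a) / (1 - āX)` is unimodular on the circle, so it may be moved to one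
-- of the two equal factors `√(1 - āX)`.
lemma X_sub_C_of_norm_lt_one {a : ℂ} (ha : ‖a‖ < 1) :
    HasBalancedFactorization (Polynomial.X - Polynomial.C a) := by
  set w := starRingEnd ℂ a with hw
  have hwa : ‖w‖ = ‖a‖ := Complex.norm_conj a
  have hG := absSummable_geometric (hwa.trans_lt ha)
  have hH := absSummable_sqrtOneSub (hwa.trans_lt ha).le
  have hlin := AbsSummable.coe_polynomial (Polynomial.X - Polynomial.C a)
  have hden := AbsSummable.coe_polynomial (1 - Polynomial.C w * Polynomial.X)
  have hcoe : ((1 - Polynomial.C w * Polynomial.X : ℂ[X]) : ℂ⟦X⟧) = 1 - C w * X := by simp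
  have hunimod (z : ℂ) (hz : ‖z‖ = 1) :
      ‖z - a‖ * ‖discEval (rescale w (mk 1)) z‖ = 1 := by
    rw [← norm_one_sub_conj_mul hz, ← hw, mul_comm, ← norm_mul]
    have h := hG.discEval_mul hden hz.le
    rw [hcoe, geometric_mul_one_sub, ← hcoe, discEval_coe_polynomial, ← Polynomial.coe_one,
      discEval_coe_polynomial, Polynomial.eval_one] at h
    simpa using congrArg norm h.symm
  refine ⟨_, _, (hlin.mul hG).mul hH, hH, ?_, fun z hz => ?_⟩
  · rw [mul_assoc, sqrtOneSub_mul_self, mul_assoc, geometric_mul_one_sub, mul_one]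
  · rw [(hlin.mul hG).discEval_mul hH hz.le, hlin.discEval_mul hG hz.le, norm_mul, norm_mul,
      discEval_coe_polynomial, Polynomial.eval_sub, Polynomial.eval_X, Polynomial.eval_C,
      hunimod z hz, one_mul]

end HasBalancedFactorization

lemma hasBalancedFactorization (p : ℂ[X]) : HasBalancedFactorization p := by
  rw [(IsAlgClosed.splits p).eq_prod_roots]
  refine (HasBalancedFactorization.const _).mul <| Multiset.prod_induction _ _
    (fun _ _ => .mul) (by simpa using HasBalancedFactorization.const 1) fun q hq => ?_
  obtain ⟨a, -, rfl⟩ := Multiset.mem_map.mp hq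
  exact (lt_or_ge ‖a‖ 1).elim .X_sub_C_of_norm_lt_one .X_sub_C_of_one_le_norm

end PowerSeries

section Parseval

open MeasureTheory PowerSeries AddCircle

lemma hasSum_norm_sq_of_orthonormal {𝕜 E ι : Type*} [RCLike 𝕜] [NormedAddCommGroup E]
    [InnerProductSpace 𝕜 E] {v : ι → E} (hv : Orthonormal 𝕜 v) {a : ι → 𝕜} {x : E}
    (hx : HasSum (fun i => a i • v i) x) : HasSum (fun i => ‖a i‖ ^ 2) (‖x‖ ^ 2) := by
  refine ((hx.norm.pow 2).congr fun s => ?_)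
  simpa using hv.orthogonalFamily.norm_sum a s

lemma norm_toLp_sq {X 𝕜 : Type*} [RCLike 𝕜] [TopologicalSpace X] [CompactSpace X]
    [MeasurableSpace X] [BorelSpace X] (μ : Measure X) [IsFiniteMeasure μ]
    (f : C(X, 𝕜)) : ‖ContinuousMap.toLp 2 μ 𝕜 f‖ ^ 2 = ∫ x, ‖f x‖ ^ 2 ∂μ := by
  apply RCLike.ofReal_injective (K := 𝕜)
  rw [RCLike.ofReal_pow, ← inner_self_eq_norm_sq_to_K, ContinuousMap.inner_toLp, ← integral_ofReal]
  simp only [RCLike.mul_conj, RCLike.ofReal_pow]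

instance : IsProbabilityMeasure (volume : Measure UnitAddCircle) := ⟨UnitAddCircle.measure_univ⟩

lemma AbsSummable.hasSum_norm_coeff_sq {φ : ℂ⟦X⟧} (hφ : AbsSummable φ) :
    HasSum (fun n => ‖coeff n φ‖ ^ 2) (∫ x : UnitAddCircle, ‖discEval φ (toCircle x)‖ ^ 2) := by
  have hvol : (volume : Measure UnitAddCircle) = haarAddCircle := by
    rw [volume_eq_smul_haarAddCircle, ENNReal.ofReal_one, one_smul]
  have hsum : Summable fun n : ℕ => coeff n φ • (fourier n : C(UnitAddCircle, ℂ)) :=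
    .of_norm <| by simpa only [norm_smul, fourier_norm, mul_one, AbsSummable] using hφ
  have heval (x : UnitAddCircle) :
      (∑' n : ℕ, coeff n φ • (fourier n : C(UnitAddCircle, ℂ))) x = discEval φ (toCircle x) := by
    refine (ContinuousMap.tsum_apply hsum x).symm.trans (tsum_congr fun n => ?_)
    simp [toCircle_nsmul]
  rw [hvol]
  simp only [← heval, ← norm_toLp_sq]
  refine hasSum_norm_sq_of_orthonormal (orthonormal_fourier.comp _ Nat.cast_injective) ?_
  simpa using hsum.hasSum.mapL (ContinuousMap.toLp 2 haarAddCircle ℂ)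

lemma norm_coeff_mul_sq_div_le {𝕜 : Type*} [NormedField 𝕜] (φ ψ : 𝕜⟦X⟧) (n : ℕ) :
    ‖coeff n (φ * ψ)‖ ^ 2 / (n + 1) ≤
      ∑ kl ∈ antidiagonal n, ‖coeff kl.1 φ‖ ^ 2 * ‖coeff kl.2 ψ‖ ^ 2 := by
  rw [div_le_iff₀' (by positivity), coeff_mul]
  calc
    _ ≤ (∑ kl ∈ antidiagonal n, ‖coeff kl.1 φ * coeff kl.2 ψ‖) ^ 2 := by
      gcongr
      exact norm_sum_le _ _
    _ ≤ #(antidiagonal n) * ∑ kl ∈ antidiagonal n, ‖coeff kl.1 φ * coeff kl.2 ψ‖ ^ 2 :=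
      sq_sum_le_card_mul_sum_sq
    _ = _ := by
      simp only [Nat.card_antidiagonal, Nat.cast_add_one, norm_mul, mul_pow]

lemma sum_sum_antidiagonal_mul_le {f g : ℕ → ℝ} {A B : ℝ} (hf0 : 0 ≤ f) (hg0 : 0 ≤ g)
    (hf : HasSum f A) (hg : HasSum g B) (s : Finset ℕ) :
    ∑ n ∈ s, ∑ kl ∈ antidiagonal n, f kl.1 * g kl.2 ≤ A * B := by
  have hfg := hf.summable.mul_of_nonneg hg.summable hf0 hg0
  rw [← hf.tsum_eq, ← hg.tsum_eq,
    hf.summable.tsum_mul_tsum_eq_tsum_sum_antidiagonal hg.summable hfg]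
  exact (summable_sum_mul_antidiagonal_of_summable_mul hfg).sum_le_tsum s
    fun n _ => sum_nonneg fun _ _ => mul_nonneg (hf0 _) (hg0 _)

lemma sum_norm_coeff_mul_sq_div_le {𝕜 : Type*} [NormedField 𝕜] {φ ψ : 𝕜⟦X⟧} {A B : ℝ}
    (hφ : HasSum (fun n => ‖coeff n φ‖ ^ 2) A) (hψ : HasSum (fun n => ‖coeff n ψ‖ ^ 2) B)
    (s : Finset ℕ) : ∑ n ∈ s, ‖coeff n (φ * ψ)‖ ^ 2 / (n + 1) ≤ A * B :=
  (sum_le_sum fun n _ => norm_coeff_mul_sq_div_le φ ψ n).trans <|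
    sum_sum_antidiagonal_mul_le (fun _ => sq_nonneg _) (fun _ => sq_nonneg _) hφ hψ s

-- Carleman's inequality: the embedding of `H¹` into the Bergman space `A²` is contractive.
lemma sum_norm_coeff_sq_div_le (p : Polynomial ℂ) (s : Finset ℕ) :
    ∑ n ∈ s, ‖p.coeff n‖ ^ 2 / (n + 1) ≤ (∫ x : UnitAddCircle, ‖p.eval (toCircle x : ℂ)‖) ^ 2 := by
  obtain ⟨F, H, hF, hH, hFH, hnorm⟩ := hasBalancedFactorization p
  have hF_sq (x : UnitAddCircle) :
      ‖discEval F (toCircle x)‖ ^ 2 = ‖p.eval (toCircle x : ℂ)‖ := by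
    rw [← discEval_coe_polynomial, ← hFH, hF.discEval_mul hH (Circle.norm_coe _).le, norm_mul,
      ← hnorm _ (Circle.norm_coe _), sq]
  have hparseval := sum_norm_coeff_mul_sq_div_le hF.hasSum_norm_coeff_sq
    hH.hasSum_norm_coeff_sq s
  simpa only [hFH, Polynomial.coeff_coe, ← hnorm _ (Circle.norm_coe _), hF_sq, ← sq]
    using hparseval

end Parseval

section Torus

open MeasureTheory MvPolynomial

lemma sum_sq_integral_le {X ι : Type*} [MeasurableSpace X] {μ : Measure X} (s : Finset ι)
    {G : ι → X → ℝ} {H : X → ℝ} (hG : ∀ k ∈ s, Integrable (G k) μ) (hH : Integrable H μ)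
    (hH0 : ∀ x, 0 ≤ H x) (hGH : ∀ x, ∑ k ∈ s, G k x ^ 2 ≤ H x ^ 2) :
    ∑ k ∈ s, (∫ x, G k x ∂μ) ^ 2 ≤ (∫ x, H x ∂μ) ^ 2 := by
  let V (x : X) : EuclideanSpace ℝ s := WithLp.toLp 2 fun k => G k x
  have hsum (a : ι → ℝ) : ∑ k ∈ s, a k ^ 2 = ‖WithLp.toLp 2 fun k : s => a k‖ ^ 2 := by
    simp only [EuclideanSpace.norm_sq_eq, Real.norm_eq_abs, sq_abs, sum_coe_sort s fun k => a k ^ 2]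
  have hint : ∫ x, V x ∂μ = WithLp.toLp 2 fun k : s => ∫ x, G k x ∂μ := by
    ext k
    exact eval_integral_piLp (f := V) (fun k => hG k k.2) k
  rw [hsum, ← hint]
  gcongr
  refine norm_integral_le_of_norm_le hH (.of_forall fun x => ?_)
  exact le_of_sq_le_sq ((hsum fun k => G k x).ge.trans (hGH x)) (hH0 x)

section FinCons

variable {X E : Type*} [MeasureSpace X] [SigmaFinite (volume : Measure X)] [NormedAddCommGroup E]
  {n : ℕ} {f : (Fin (n + 1) → X) → E}

lemma measurePreserving_finCons :
    MeasurePreserving fun p : X × (Fin n → X) => (Fin.cons p.1 p.2 : Fin (n + 1) → X) := by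
  have h := (volume_preserving_piFinSuccAbove (fun _ : Fin (n + 1) => X) 0).symm
  simp only [MeasurableEquiv.piFinSuccAbove, Fin.insertNthEquiv_zero] at h
  exact h

lemma integrable_comp_finCons (hf : Integrable f) :
    Integrable fun p : X × (Fin n → X) => f (Fin.cons p.1 p.2) :=
  measurePreserving_finCons.integrable_comp_of_integrable hf

lemma integral_integral_finCons [NormedSpace ℝ E] (hf : Integrable f) :
    ∫ y : Fin n → X, ∫ t : X, f (Fin.cons t y) = ∫ x, f x := by
  have hcons := measurePreserving_finCons (X := X) (n := n)
  rw [← integral_prod_symm _ (integrable_comp_finCons hf), ← Measure.volume_eq_prod,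
    ← hcons.map_eq, integral_map hcons.aemeasurable (hcons.map_eq ▸ hf.aestronglyMeasurable)]

end FinCons

/-- The point `(e^{2πi x_j})_j` of the distinguished boundary of the polydisc; this parametrizes the
boundary by the additive torus with its Haar probability measure. -/
noncomputable def torusPoint {ι : Type*} (x : UnitAddTorus ι) : ι → ℂ :=
  fun j => AddCircle.toCircle (x j)

/-- The Hardy space `H¹` norm of a polynomial on the polydisc, as an integral over its distinguished
boundary. -/
noncomputable def hardyNorm {ι : Type*} [Fintype ι] (P : MvPolynomial ι ℂ) : ℝ :=
  ∫ x : UnitAddTorus ι, ‖eval (torusPoint x) P‖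

/-- The square of the norm of a polynomial in the Bergman space `A²` of the polydisc with normalized
volume, encoded through the orthogonality of monomials: `‖z^α‖² = 1 / ∏ (α_j + 1)`. -/
noncomputable def bergmanNormSq {ι : Type*} [Fintype ι] (P : MvPolynomial ι ℂ) : ℝ :=
  ∑ α ∈ P.support, ‖coeff α P‖ ^ 2 / ∏ j, ((α j : ℝ) + 1)

lemma continuous_eval_torusPoint {ι : Type*} (P : MvPolynomial ι ℂ) :
    Continuous fun x : UnitAddTorus ι => eval (torusPoint x) P :=
  (continuous_eval P).comp (by unfold torusPoint; fun_prop)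

lemma integrable_norm_eval_torusPoint {ι : Type*} [Fintype ι] (P : MvPolynomial ι ℂ) :
    Integrable fun x : UnitAddTorus ι => ‖eval (torusPoint x) P‖ :=
  (continuous_eval_torusPoint P).norm.integrable_of_hasCompactSupport (.of_compactSpace _)

lemma bergmanNormSq_eq_sum_finSuccEquiv {n : ℕ} (P : MvPolynomial (Fin (n + 1)) ℂ) :
    bergmanNormSq P = ∑ k ∈ (finSuccEquiv ℂ n P).support,
      bergmanNormSq ((finSuccEquiv ℂ n P).coeff k) / (k + 1) := by
  simp only [bergmanNormSq, sum_div]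
  rw [sum_sigma']
  refine sum_bij' (fun α _ => ⟨α 0, α.tail⟩) (fun kβ _ => kβ.2.cons kβ.1) ?_ ?_ ?_ ?_ ?_
  · intro α hα
    rw [mem_sigma, mem_support_coeff_finSuccEquiv, Finsupp.cons_tail, mem_support_finSuccEquiv]
    exact ⟨⟨α, hα, rfl⟩, hα⟩
  · intro kβ hkβ
    exact mem_support_coeff_finSuccEquiv.mp (mem_sigma.mp hkβ).2
  · exact fun α _ => α.cons_tail
  · exact fun kβ _ => by simp
  · intro α _
    rw [finSuccEquiv_coeff_coeff, Finsupp.cons_tail, Fin.prod_univ_succ, div_div, mul_comm]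
    rfl

lemma torusPoint_finCons {n : ℕ} (t : UnitAddCircle) (y : UnitAddTorus (Fin n)) :
    torusPoint (Fin.cons t y) = Fin.cons (AddCircle.toCircle t : ℂ) (torusPoint y) := by
  ext j
  cases j using Fin.cases <;> rfl

lemma sum_bergmanNormSq_finSuccEquiv_le {n : ℕ} (P : MvPolynomial (Fin (n + 1)) ℂ)
    (y : UnitAddTorus (Fin n)) :
    ∑ k ∈ (finSuccEquiv ℂ n P).support,
        (‖eval (torusPoint y) ((finSuccEquiv ℂ n P).coeff k)‖ / √(k + 1)) ^ 2 ≤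
      (∫ t : UnitAddCircle, ‖eval (torusPoint (Fin.cons t y)) P‖) ^ 2 := by
  have h := sum_norm_coeff_sq_div_le ((finSuccEquiv ℂ n P).map (eval (torusPoint y)))
    (finSuccEquiv ℂ n P).support
  simp only [Polynomial.coeff_map, ← eval_eq_eval_mv_eval', ← torusPoint_finCons] at h
  refine (sum_congr rfl fun k _ => ?_).trans_le h
  rw [div_pow, Real.sq_sqrt k.cast_add_one_pos.le]

lemma bergmanNormSq_le_hardyNorm_sq_fin : ∀ {n : ℕ} (P : MvPolynomial (Fin n) ℂ),
    bergmanNormSq P ≤ hardyNorm P ^ 2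
  | 0, P => by
    rw [eq_C_of_isEmpty P]
    simp only [bergmanNormSq, hardyNorm, support_C]
    split_ifs with h <;> simp [h]
  | n + 1, P => by
    have hint := integrable_norm_eval_torusPoint P
    set Q := finSuccEquiv ℂ n P
    calc
      bergmanNormSq P = ∑ k ∈ Q.support, bergmanNormSq (Q.coeff k) / (k + 1) :=
        bergmanNormSq_eq_sum_finSuccEquiv P
      _ ≤ ∑ k ∈ Q.support, (hardyNorm (Q.coeff k) / √(k + 1)) ^ 2 := by
        refine sum_le_sum fun k _ => ?_
        rw [div_pow, Real.sq_sqrt k.cast_add_one_pos.le]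
        gcongr
        exact bergmanNormSq_le_hardyNorm_sq_fin _
      _ ≤ (∫ y, ∫ t, ‖eval (torusPoint (Fin.cons t y)) P‖) ^ 2 := by
        simp only [hardyNorm, ← integral_div]
        exact sum_sq_integral_le _
          (fun k _ => (integrable_norm_eval_torusPoint (Q.coeff k)).div_const _)
          (integrable_comp_finCons hint).integral_prod_right
          (fun y => integral_nonneg fun _ => norm_nonneg _)
          (sum_bergmanNormSq_finSuccEquiv_le P)
      _ = hardyNorm P ^ 2 := by rw [integral_integral_finCons hint, hardyNorm]

lemma bergmanNormSq_rename {ι κ : Type*} [Fintype ι] [Fintype κ] (e : ι ≃ κ)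
    (P : MvPolynomial ι ℂ) : bergmanNormSq (rename e P) = bergmanNormSq P := by
  classical
  rw [bergmanNormSq, support_rename_of_injective e.injective,
    sum_image (Finsupp.mapDomain_injective e.injective).injOn]
  refine sum_congr rfl fun α _ => ?_
  rw [coeff_rename_mapDomain _ e.injective, ← e.prod_comp]
  simp only [Finsupp.mapDomain_apply e.injective]

lemma hardyNorm_rename {ι κ : Type*} [Fintype ι] [Fintype κ] (e : ι ≃ κ) (P : MvPolynomial ι ℂ) :
    hardyNorm (rename e P) = hardyNorm P := by
  simp only [hardyNorm, eval_rename]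
  exact (volume_preserving_arrowCongr' e.symm (.refl UnitAddCircle) (.id _)).integral_comp'
    fun x => ‖eval (torusPoint x) P‖

theorem bergmanNormSq_le_hardyNorm_sq {ι : Type*} [Fintype ι] (P : MvPolynomial ι ℂ) :
    bergmanNormSq P ≤ hardyNorm P ^ 2 := by
  rw [← bergmanNormSq_rename (Fintype.equivFin ι), ← hardyNorm_rename (Fintype.equivFin ι)]
  exact bergmanNormSq_le_hardyNorm_sq_fin _

lemma hardyNorm_nonneg {ι : Type*} [Fintype ι] (P : MvPolynomial ι ℂ) : 0 ≤ hardyNorm P :=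
  integral_nonneg fun _ => norm_nonneg _

lemma prod_add_single_add_one {ι : Type*} [Fintype ι] (β : ι →₀ ℕ) (n : ι) :
    (∏ j, (((β + Finsupp.single n 1 : ι →₀ ℕ) j : ℝ) + 1)) * (β n + 1) =
      (β n + 2) * ∏ j, ((β j : ℝ) + 1) := by
  classical
  have hrest : ∏ j ∈ univ.erase n, (((β + Finsupp.single n 1 : ι →₀ ℕ) j : ℝ) + 1) =
      ∏ j ∈ univ.erase n, ((β j : ℝ) + 1) :=
    prod_congr rfl fun j hj => by simp [ne_of_mem_erase hj]
  rw [← mul_prod_erase univ _ (mem_univ n), hrest,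
    ← mul_prod_erase univ (fun j => (β j : ℝ) + 1) (mem_univ n), Finsupp.add_apply,
    Finsupp.single_eq_same]
  push_cast
  ring

lemma norm_coeff_add_single_sq_mul_le {ι : Type*} [Fintype ι] (P : MvPolynomial ι ℂ) (n : ι)
    (β : ι →₀ ℕ) :
    ‖coeff (β + Finsupp.single n 1) P‖ ^ 2 /
        (∏ j, (((β + Finsupp.single n 1 : ι →₀ ℕ) j : ℝ) + 1)) *
          (β + Finsupp.single n 1 : ι →₀ ℕ) n ≤
      ‖coeff β (pderiv n P)‖ ^ 2 / (∏ j, ((β j : ℝ) + 1)) / 2 := by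
  have hcoeff : ‖coeff β (pderiv n P)‖ = ‖coeff (β + Finsupp.single n 1) P‖ * (β n + 1) := by
    rw [coeff_pderiv, norm_mul]
    norm_cast
  rw [hcoeff, Finsupp.add_apply, Finsupp.single_eq_same, Nat.cast_add_one, div_mul_eq_mul_div,
    ← mul_div_mul_right _ _ (Nat.cast_add_one_ne_zero (β n)), prod_add_single_add_one, div_div,
    mul_comm _ (2 : ℝ), mul_assoc, ← sq, ← mul_pow]
  gcongr
  linarith [(β n).cast_nonneg (α := ℝ)]

lemma sum_norm_coeff_sq_mul_le_bergmanNormSq_pderiv {ι : Type*} [Fintype ι]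
    (P : MvPolynomial ι ℂ) (n : ι) :
    ∑ α ∈ P.support, ‖coeff α P‖ ^ 2 / (∏ j, ((α j : ℝ) + 1)) * α n ≤
      bergmanNormSq (pderiv n P) / 2 := by
  let e := addRightEmbedding (Finsupp.single n 1)
  have hsub : (pderiv n P).support.map e ⊆ P.support := by
    intro α hα
    obtain ⟨β, hβ, rfl⟩ := mem_map.mp hα
    rw [mem_support_iff, coeff_pderiv] at hβ
    exact mem_support_iff.mpr (left_ne_zero_of_mul hβ)
  have hzero : ∀ α ∈ P.support, α ∉ (pderiv n P).support.map e → α n = 0 := by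
    intro α hα
    contrapose!
    intro hn
    have hα' : α - Finsupp.single n 1 + Finsupp.single n 1 = α :=
      tsub_add_cancel_of_le (Finsupp.single_le_iff.mpr (Nat.one_le_iff_ne_zero.mpr hn))
    refine mem_map.mpr ⟨α - Finsupp.single n 1, ?_, hα'⟩
    rw [mem_support_iff, coeff_pderiv, hα']
    exact mul_ne_zero (mem_support_iff.mp hα) (Nat.cast_add_one_ne_zero _)
  rw [← sum_subset hsub fun α hα hα' => by rw [hzero α hα hα', Nat.cast_zero, mul_zero],
    sum_map, bergmanNormSq, sum_div]
  exact sum_le_sum fun β _ => norm_coeff_add_single_sq_mul_le P n β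

lemma norm_torusPoint_le {ι : Type*} [Fintype ι] (x : UnitAddTorus ι) : ‖torusPoint x‖ ≤ 1 :=
  (pi_norm_le_iff_of_nonneg zero_le_one).mpr fun _ => (Circle.norm_coe _).le

end Torus

section Blei

lemma rpow_sum_rpow_le_sqrt_mul {ι : Type*} (s : Finset ι) {p : ℝ} (hp : 0 < p) {w b : ι → ℝ}
    (hw : ∀ i ∈ s, 0 ≤ w i) (hb : ∀ i ∈ s, 0 ≤ b i) (hwb : ∀ i ∈ s, b i = 0 → w i = 0) :
    (∑ i ∈ s, w i ^ (2 * p / (p + 1))) ^ ((p + 1) / (2 * p)) ≤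
      √(∑ i ∈ s, w i ^ 2 / b i) * (∑ i ∈ s, b i ^ p) ^ (1 / (2 * p)) := by
  have hconj : ((p + 1) / p).HolderConjugate (p + 1) := by
    rw [Real.holderConjugate_iff, lt_div_iff₀ hp]
    exact ⟨by linarith, by field_simp⟩
  have hquot : ∀ i ∈ s, 0 ≤ w i ^ 2 / b i := fun i hi => div_nonneg (sq_nonneg _) (hb i hi)
  have hholder := Real.inner_le_Lp_mul_Lq_of_nonneg s hconj
    (f := fun i => (w i ^ 2 / b i) ^ (p / (p + 1))) (g := fun i => b i ^ (p / (p + 1)))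
    (fun i hi => Real.rpow_nonneg (hquot i hi) _) (fun i hi => Real.rpow_nonneg (hb i hi) _)
  have hmul : ∀ i ∈ s, (w i ^ 2 / b i) ^ (p / (p + 1)) * b i ^ (p / (p + 1)) =
      w i ^ (2 * p / (p + 1)) := fun i hi => by
    rw [← Real.mul_rpow (hquot i hi) (hb i hi), div_mul_cancel_of_imp fun h => by
      rw [hwb i hi h, sq, zero_mul], ← Real.rpow_natCast_mul (hw i hi), Nat.cast_ofNat,
      mul_div_assoc]
  have hleft : ∀ i ∈ s, ((w i ^ 2 / b i) ^ (p / (p + 1))) ^ ((p + 1) / p) = w i ^ 2 / b i :=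
    fun i hi => by
      rw [← Real.rpow_mul (hquot i hi), show p / (p + 1) * ((p + 1) / p) = 1 by field_simp,
        Real.rpow_one]
  have hright : ∀ i ∈ s, (b i ^ (p / (p + 1))) ^ (p + 1) = b i ^ p := fun i hi => by
    rw [← Real.rpow_mul (hb i hi), div_mul_cancel₀ _ (by positivity)]
  rw [sum_congr rfl hmul, sum_congr rfl hleft, sum_congr rfl hright] at hholder
  have hsum_quot : 0 ≤ ∑ i ∈ s, w i ^ 2 / b i := sum_nonneg hquot
  have hsum_pow : 0 ≤ ∑ i ∈ s, b i ^ p := sum_nonneg fun i hi => Real.rpow_nonneg (hb i hi) _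
  calc
    _ ≤ _ := Real.rpow_le_rpow (sum_nonneg fun i hi => Real.rpow_nonneg (hw i hi) _) hholder
      (by positivity)
    _ = _ := by
      rw [Real.mul_rpow (by positivity) (by positivity), ← Real.rpow_mul hsum_quot,
        ← Real.rpow_mul hsum_pow, Real.sqrt_eq_rpow]
      congr 2 <;> field_simp

variable {ι : Type*} [Fintype ι] {m : ℕ}

lemma sum_prod_pow_le_sum_pow {s : Finset (ι →₀ ℕ)} (hs : ∀ α ∈ s, α.degree = m) {A : ι → ℝ}
    (hA : 0 ≤ A) : ∑ α ∈ s, ∏ n, A n ^ α n ≤ (∑ n, A n) ^ m := by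
  classical
  have hprod (α : ι → ℕ) : 0 ≤ ∏ n, A n ^ α n := prod_nonneg fun n _ => pow_nonneg (hA n) _
  have hsub : s.image (⇑) ⊆ piAntidiag univ m := fun α hα => by
    obtain ⟨β, hβ, rfl⟩ := mem_image.mp hα
    simpa [Finsupp.degree_eq_sum] using hs β hβ
  calc
    ∑ α ∈ s, ∏ n, A n ^ α n = ∑ α ∈ s.image (⇑), ∏ n, A n ^ α n :=
      (sum_image (f := fun α : ι → ℕ => ∏ n, A n ^ α n) DFunLike.coe_injective.injOn).symm
    _ ≤ ∑ α ∈ piAntidiag univ m, ∏ n, A n ^ α n :=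
      sum_le_sum_of_subset_of_nonneg hsub fun α _ _ => hprod α
    _ ≤ (∑ n, A n) ^ m := by
      rw [sum_pow_eq_sum_piAntidiag]
      exact sum_le_sum fun α _ =>
        le_mul_of_one_le_left (hprod α) (mod_cast Nat.multinomial_pos _ _)

lemma inv_prod_rpow_le {α : ι →₀ ℕ} (hα : α.degree = m) (hm : m ≠ 0) {A : ι → ℝ} (hA : 0 ≤ A) :
    (∏ n, A n ^ (α n / m : ℝ))⁻¹ ≤ ∑ n, (α n / m : ℝ) * (A n)⁻¹ := by
  have hsum : ∑ n, (α n / m : ℝ) = 1 := by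
    rw [← sum_div, div_eq_one_iff_eq (Nat.cast_ne_zero.mpr hm), ← hα, Finsupp.degree_eq_sum]
    norm_cast
  have h := Real.geom_mean_le_arith_mean_weighted univ (fun n => (α n / m : ℝ)) (fun n => (A n)⁻¹)
    (fun _ _ => by positivity) hsum (fun n _ => inv_nonneg.mpr (hA n))
  simpa only [Real.inv_rpow (hA _), prod_inv_distrib] using h

lemma sum_sq_div_prod_rpow_le {s : Finset (ι →₀ ℕ)} (hs : ∀ α ∈ s, α.degree = m) (hm : m ≠ 0)
    {w : (ι →₀ ℕ) → ℝ} {A : ι → ℝ} (hA : 0 ≤ A) (h : ∀ n, ∑ α ∈ s, w α ^ 2 * α n ≤ A n ^ 2) :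
    ∑ α ∈ s, w α ^ 2 / ∏ n, A n ^ (α n / m : ℝ) ≤ (∑ n, A n) / m := by
  calc
    _ ≤ ∑ α ∈ s, w α ^ 2 * ∑ n, (α n / m : ℝ) * (A n)⁻¹ := by
      refine sum_le_sum fun α hα => ?_
      rw [div_eq_mul_inv]
      gcongr
      exact inv_prod_rpow_le (hs α hα) hm hA
    _ = ∑ n, (∑ α ∈ s, w α ^ 2 * α n) * ((A n)⁻¹ / m) := by
      simp only [mul_sum, sum_mul]
      rw [sum_comm]
      exact sum_congr rfl fun n _ => sum_congr rfl fun α _ => by ring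
    _ ≤ ∑ n, A n ^ 2 * ((A n)⁻¹ / m) := by
      gcongr with n
      · exact div_nonneg (inv_nonneg.mpr (hA n)) m.cast_nonneg
      · exact h n
    _ = (∑ n, A n) / m := by
      rw [sum_div]
      refine sum_congr rfl fun n _ => ?_
      rw [← mul_div_assoc, sq, mul_self_mul_inv]

lemma eq_zero_of_prod_rpow_eq_zero {s : Finset (ι →₀ ℕ)} {w : (ι →₀ ℕ) → ℝ} {A : ι → ℝ}
    (hA : 0 ≤ A) (h : ∀ n, ∑ α ∈ s, w α ^ 2 * α n ≤ A n ^ 2) {α : ι →₀ ℕ} (hα : α ∈ s)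
    (hprod : ∏ n, A n ^ (α n / m : ℝ) = 0) : w α = 0 := by
  obtain ⟨n, -, hn⟩ := prod_eq_zero_iff.mp hprod
  obtain ⟨hAn, hαn⟩ := (Real.rpow_eq_zero_iff_of_nonneg (hA n)).mp hn
  have hle : w α ^ 2 * α n ≤ 0 := calc
    _ ≤ ∑ α ∈ s, w α ^ 2 * α n :=
      single_le_sum (f := fun α => w α ^ 2 * (α n : ℝ)) (fun _ _ => by positivity) hα
    _ ≤ 0 := by simpa [hAn] using h n
  have hzero : w α ^ 2 * α n = 0 := hle.antisymm (by positivity)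
  exact (pow_eq_zero_iff two_ne_zero).mp
    ((mul_eq_zero.mp hzero).resolve_right fun h0 => hαn (by rw [h0, zero_div]))

theorem rpow_sum_rpow_le_sum_div_sqrt {s : Finset (ι →₀ ℕ)} (hs : ∀ α ∈ s, α.degree = m)
    (hm : m ≠ 0) {w : (ι →₀ ℕ) → ℝ} (hw : ∀ α ∈ s, 0 ≤ w α) {A : ι → ℝ} (hA : 0 ≤ A)
    (h : ∀ n, ∑ α ∈ s, w α ^ 2 * α n ≤ A n ^ 2) :
    (∑ α ∈ s, w α ^ ((2 * m : ℝ) / (m + 1))) ^ (((m : ℝ) + 1) / (2 * m)) ≤ (∑ n, A n) / √m := by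
  have hm0 : (0 : ℝ) < m := mod_cast Nat.pos_of_ne_zero hm
  have hS : 0 ≤ ∑ n, A n := sum_nonneg fun n _ => hA n
  let b (α : ι →₀ ℕ) : ℝ := ∏ n, A n ^ (α n / m : ℝ)
  have hb (α) : 0 ≤ b α := prod_nonneg fun n _ => Real.rpow_nonneg (hA n) _
  have hb_rpow (α) : b α ^ (m : ℝ) = ∏ n, A n ^ α n := by
    rw [← Real.finsetProd_rpow _ _ fun n _ => Real.rpow_nonneg (hA n) _]
    refine prod_congr rfl fun n _ => ?_
    rw [← Real.rpow_mul (hA n), div_mul_cancel₀ _ hm0.ne', Real.rpow_natCast]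
  calc
    _ ≤ √(∑ α ∈ s, w α ^ 2 / b α) * (∑ α ∈ s, b α ^ (m : ℝ)) ^ (1 / (2 * m : ℝ)) :=
      rpow_sum_rpow_le_sqrt_mul s hm0 hw (fun α _ => hb α) fun α hα =>
        eq_zero_of_prod_rpow_eq_zero hA h hα
    _ ≤ √((∑ n, A n) / m) * ((∑ n, A n) ^ m) ^ (1 / (2 * m : ℝ)) := by
      simp only [hb_rpow]
      have hpow : 0 ≤ ∑ α ∈ s, ∏ n, A n ^ α n :=
        sum_nonneg fun α _ => prod_nonneg fun n _ => pow_nonneg (hA n) _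
      gcongr
      · exact sum_sq_div_prod_rpow_le hs hm hA h
      · exact sum_prod_pow_le_sum_pow hs hA
    _ = (∑ n, A n) / √m := by
      rw [← Real.rpow_natCast_mul hS, show (m : ℝ) * (1 / (2 * m)) = 1 / 2 by field_simp,
        ← Real.sqrt_eq_rpow, Real.sqrt_div hS, div_mul_eq_mul_div, Real.mul_self_sqrt hS]

end Blei

section Gradient

open MvPolynomial

variable {ι : Type*} [Fintype ι] {m : ℕ}

lemma hasFDerivAt_eval {𝕜 : Type*} [NontriviallyNormedField 𝕜] (P : MvPolynomial ι 𝕜) (z : ι → 𝕜) :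
    HasFDerivAt (fun z => eval z P)
      (∑ n, eval z (pderiv n P) • ContinuousLinearMap.proj (R := 𝕜) (φ := fun _ : ι => 𝕜) n) z := by
  classical
  induction P using MvPolynomial.induction_on with
  | C a =>
    simp only [eval_C]
    refine (hasFDerivAt_const a z).congr_fderiv ?_
    ext v
    simp
  | add P Q hP hQ =>
    simp only [map_add]
    refine (hP.fun_add hQ).congr_fderiv ?_
    ext v
    simp [add_mul, sum_add_distrib]
  | mul_X P i hP =>
    simp only [map_mul, eval_X]
    refine (hP.mul (hasFDerivAt_apply i z)).congr_fderiv ?_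
    ext v
    simp [Pi.single_apply, add_mul, sum_add_distrib, mul_sum, apply_ite (eval z), mul_assoc]

lemma hasDerivAt_eval_add_smul {𝕜 : Type*} [NontriviallyNormedField 𝕜] (P : MvPolynomial ι 𝕜)
    (z y : ι → 𝕜) (t : 𝕜) :
    HasDerivAt (fun t => eval (z + t • y) P) (∑ n, eval (z + t • y) (pderiv n P) * y n) t := by
  have hline : HasDerivAt (fun t : 𝕜 => z + t • y) y t := by
    simpa using ((hasDerivAt_id t).smul_const y).const_add z
  exact ((hasFDerivAt_eval P _).comp_hasDerivAt t hline).congr_deriv (by simp)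

lemma eval_smul_of_isHomogeneous {σ R : Type*} [CommSemiring R] {P : MvPolynomial σ R}
    (hP : P.IsHomogeneous m) (c : R) (z : σ → R) : eval (c • z) P = c ^ m * eval z P := by
  rw [eval_eq, eval_eq, mul_sum]
  refine sum_congr rfl fun α hα => ?_
  simp only [Pi.smul_apply, smul_eq_mul, mul_pow, prod_mul_distrib, prod_pow_eq_pow_sum,
    ← hP.degree_eq_sum_deg_support hα]
  rw [mul_left_comm]

variable {P : MvPolynomial ι ℂ} {M : ℝ}

lemma norm_eval_le_norm_pow_mul (hP : P.IsHomogeneous m) (hM : ∀ z, ‖z‖ ≤ 1 → ‖eval z P‖ ≤ M)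
    (z : ι → ℂ) : ‖eval z P‖ ≤ ‖z‖ ^ m * M := by
  have hz : z = (‖z‖ : ℂ) • ((‖z‖ : ℂ)⁻¹ • z) := by
    rcases eq_or_ne z 0 with rfl | h
    · simp
    · rw [smul_inv_smul₀ (mod_cast norm_ne_zero_iff.mpr h)]
  have hunit : ‖(‖z‖ : ℂ)⁻¹ • z‖ ≤ 1 := by
    rw [norm_smul, norm_inv, Complex.norm_real, norm_norm]
    exact inv_mul_le_one
  calc
    ‖eval z P‖ = ‖z‖ ^ m * ‖eval ((‖z‖ : ℂ)⁻¹ • z) P‖ := by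
      conv_lhs => rw [hz, eval_smul_of_isHomogeneous hP]
      rw [norm_mul, norm_pow, Complex.norm_real, norm_norm]
    _ ≤ ‖z‖ ^ m * M := by
      gcongr
      exact hM _ hunit

lemma sum_norm_eval_pderiv_le_of_pos (hP : P.IsHomogeneous m) (hM : ∀ z, ‖z‖ ≤ 1 → ‖eval z P‖ ≤ M)
    {z : ι → ℂ} (hz : ‖z‖ ≤ 1) {r : ℝ} (hr : 0 < r) :
    ∑ n, ‖eval z (pderiv n P)‖ ≤ (1 + r) ^ m * M / r := by
  have hM0 : 0 ≤ M := (norm_nonneg _).trans (hM 0 (by simp))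
  have hphase (n : ι) : ∃ u : ℂ, ‖u‖ = 1 ∧ (‖eval z (pderiv n P)‖ : ℂ) = u * eval z (pderiv n P) :=
    RCLike.exists_norm_eq_mul_self _
  choose y hy hyP using hphase
  have hy1 : ‖y‖ ≤ 1 := (pi_norm_le_iff_of_nonneg zero_le_one).mpr fun n => (hy n).le
  have hderiv : deriv (fun t : ℂ => eval (z + t • y) P) 0 =
      (∑ n, ‖eval z (pderiv n P)‖ : ℝ) := by
    simpa [hyP, mul_comm] using (hasDerivAt_eval_add_smul P z y 0).deriv
  have hdiff : Differentiable ℂ fun t : ℂ => eval (z + t • y) P := fun t =>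
    (hasDerivAt_eval_add_smul P z y t).differentiableAt
  have hsphere : ∀ t ∈ Metric.sphere (0 : ℂ) r, ‖eval (z + t • y) P‖ ≤ (1 + r) ^ m * M := by
    intro t ht
    have hnorm : ‖z + t • y‖ ≤ 1 + r := calc
      _ ≤ ‖z‖ + ‖t‖ * ‖y‖ := (norm_add_le _ _).trans_eq (by rw [norm_smul])
      _ ≤ 1 + r * 1 := by
        rw [mem_sphere_zero_iff_norm.mp ht]
        gcongr
      _ = 1 + r := by rw [mul_one]
    exact (norm_eval_le_norm_pow_mul hP hM _).trans (by gcongr)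
  have hcauchy := Complex.norm_deriv_le_of_forall_mem_sphere_norm_le hr hdiff.diffContOnCl hsphere
  rwa [hderiv, Complex.norm_real, Real.norm_of_nonneg (by positivity)] at hcauchy

-- `r = 1 / (m - 1)` minimises `(1 + r) ^ m / r`.
lemma sum_norm_eval_pderiv_le (hm : 2 ≤ m) (hP : P.IsHomogeneous m)
    (hM : ∀ z, ‖z‖ ≤ 1 → ‖eval z P‖ ≤ M) {z : ι → ℂ} (hz : ‖z‖ ≤ 1) :
    ∑ n, ‖eval z (pderiv n P)‖ ≤ m * ((m : ℝ) / (m - 1)) ^ (m - 1) * M := by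
  obtain ⟨k, rfl⟩ := Nat.exists_eq_add_of_le' hm
  have h := sum_norm_eval_pderiv_le_of_pos hP hM hz (r := 1 / ((k : ℝ) + 1)) (by positivity)
  refine h.trans_eq ?_
  push_cast
  rw [show (k : ℝ) + 2 - 1 = k + 1 by ring, show 1 + 1 / ((k : ℝ) + 1) = (k + 2) / (k + 1) by
    field_simp; ring, pow_succ]
  generalize ((k + 2 : ℝ) / (k + 1)) ^ (k + 1) = x
  field_simp

end Gradient

section OfCoeffs

open MvPolynomial

variable {ι R : Type*} [CommSemiring R]

/-- The polynomial `∑_{α ∈ Λ} c_α z^α`, for a family of multi-indices given as functions. -/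
noncomputable def ofCoeffs [Finite ι] (Λ : Finset (ι → ℕ)) (c : (ι → ℕ) → R) :
    MvPolynomial ι R :=
  ∑ α ∈ Λ, monomial (Finsupp.equivFunOnFinite.symm α) (c α)

variable {Λ : Finset (ι → ℕ)} (c : (ι → ℕ) → R)

lemma eval_ofCoeffs [Fintype ι] (z : ι → R) :
    eval z (ofCoeffs Λ c) = ∑ α ∈ Λ, c α * ∏ j, z j ^ α j := by
  simp [ofCoeffs, eval_monomial, Finsupp.prod_fintype]

lemma isHomogeneous_ofCoeffs [Fintype ι] {m : ℕ} (hΛ : ∀ α ∈ Λ, ∑ j, α j = m) :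
    (ofCoeffs Λ c).IsHomogeneous m :=
  .sum _ _ _ fun α hα => isHomogeneous_monomial _ <| by
    simpa [Finsupp.degree_eq_sum] using hΛ α hα

lemma coeff_ofCoeffs [Finite ι] [DecidableEq (ι → ℕ)] (β : ι →₀ ℕ) :
    coeff β (ofCoeffs Λ c) = if ⇑β ∈ Λ then c β else 0 := by
  classical
  simp only [ofCoeffs, coeff_sum, coeff_monomial, Equiv.symm_apply_eq, sum_ite_eq']
  rfl

lemma sum_support_ofCoeffs [Finite ι] {E : Type*} [AddCommMonoid E]
    {g : (ι → ℕ) → R → E} (hg : ∀ α, g α 0 = 0) :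
    ∑ β ∈ (ofCoeffs Λ c).support, g β (coeff β (ofCoeffs Λ c)) = ∑ α ∈ Λ, g α (c α) := by
  classical
  let e := (Finsupp.equivFunOnFinite (α := ι) (M := ℕ)).symm.toEmbedding
  have hsub : (ofCoeffs Λ c).support ⊆ Λ.map e := fun β hβ => by
    rw [mem_support_iff, coeff_ofCoeffs, ne_eq, ite_eq_right_iff, Classical.not_imp] at hβ
    exact mem_map.mpr ⟨β, hβ.1, by simp [e]⟩
  rw [sum_subset hsub fun β _ hβ => by rw [notMem_support_iff.mp hβ, hg], sum_map]
  exact sum_congr rfl fun α hα => by simp [e, coeff_ofCoeffs, hα]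

end OfCoeffs

section BohnenblustHille

open MvPolynomial

variable {ι : Type*} [Fintype ι] {m : ℕ}

lemma sum_hardyNorm_pderiv_le (hm : 2 ≤ m) {P : MvPolynomial ι ℂ} (hP : P.IsHomogeneous m) {M : ℝ}
    (hM : ∀ z, ‖z‖ ≤ 1 → ‖eval z P‖ ≤ M) :
    ∑ n, hardyNorm (pderiv n P) ≤ m * ((m : ℝ) / (m - 1)) ^ (m - 1) * M := by
  simp only [hardyNorm]
  rw [← MeasureTheory.integral_finsetSum _ fun n _ => integrable_norm_eval_torusPoint _]
  refine (MeasureTheory.integral_mono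
    (MeasureTheory.integrable_finsetSum _ fun n _ => integrable_norm_eval_torusPoint _)
    (MeasureTheory.integrable_const _) fun x => sum_norm_eval_pderiv_le hm hP hM
      (norm_torusPoint_le x)).trans_eq ?_
  simp

lemma sum_norm_coeff_div_sqrt_sq_mul_le (P : MvPolynomial ι ℂ) (n : ι) :
    ∑ α ∈ P.support, (‖coeff α P‖ / √(∏ j, ((α j : ℝ) + 1))) ^ 2 * α n ≤
      (hardyNorm (pderiv n P) / √2) ^ 2 := by
  have hsq (α : ι →₀ ℕ) : (‖coeff α P‖ / √(∏ j, ((α j : ℝ) + 1))) ^ 2 =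
      ‖coeff α P‖ ^ 2 / ∏ j, ((α j : ℝ) + 1) := by
    rw [div_pow, Real.sq_sqrt (by positivity)]
  simp only [hsq]
  rw [div_pow, Real.sq_sqrt zero_le_two]
  refine (sum_norm_coeff_sq_mul_le_bergmanNormSq_pderiv P n).trans ?_
  gcongr
  exact bergmanNormSq_le_hardyNorm_sq _

theorem rpow_sum_norm_coeff_div_sqrt_rpow_le (hm : 2 ≤ m) {P : MvPolynomial ι ℂ}
    (hP : P.IsHomogeneous m) {M : ℝ} (hM : ∀ z, ‖z‖ ≤ 1 → ‖eval z P‖ ≤ M) :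
    (∑ α ∈ P.support, (‖coeff α P‖ / √(∏ j, ((α j : ℝ) + 1))) ^ ((2 * m : ℝ) / (m + 1))) ^
        (((m : ℝ) + 1) / (2 * m)) ≤ √(m / 2) * ((m : ℝ) / (m - 1)) ^ (m - 1) * M := by
  have hdeg : ∀ α ∈ P.support, α.degree = m := fun α hα => by
    by_contra h
    exact mem_support_iff.mp hα (hP.coeff_eq_zero h)
  calc
    _ ≤ (∑ n, hardyNorm (pderiv n P) / √2) / √m :=
      rpow_sum_rpow_le_sum_div_sqrt hdeg (by positivity) (fun α _ => by positivity)
        (fun n => div_nonneg (hardyNorm_nonneg _) (Real.sqrt_nonneg _))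
        (sum_norm_coeff_div_sqrt_sq_mul_le P)
    _ ≤ m * ((m : ℝ) / (m - 1)) ^ (m - 1) * M / √2 / √m := by
      rw [← sum_div]
      gcongr
      exact sum_hardyNorm_pderiv_le hm hP hM
    _ = √(m / 2) * ((m : ℝ) / (m - 1)) ^ (m - 1) * M := by
      rw [Real.sqrt_div m.cast_nonneg]
      have hm0 : (0 : ℝ) < m := mod_cast pos_of_gt hm
      field_simp
      rw [Real.sq_sqrt hm0.le]
      ring

lemma le_biSup_of_isCompact {X : Type*} [TopologicalSpace X] {K : Set X} (hK : IsCompact K)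
    {f : X → ℝ} (hf : ContinuousOn f K) {x : X} (hx : x ∈ K) : f x ≤ ⨆ y ∈ K, f y := by
  refine le_ciSup₂ (f := fun y (_ : y ∈ K) => f y) ?_ x hx
  refine (hK.bddAbove_image hf).mono (Set.iUnion_subset fun y => ?_)
  rintro _ ⟨hy, rfl⟩
  exact Set.mem_image_of_mem f hy

lemma sqrt_half_le_rpow (hm : m ≠ 0) : √((m : ℝ) / 2) ≤ (m : ℝ) ^ (((m : ℝ) - 1) / (2 * m)) := by
  have hm0 : (0 : ℝ) < m := mod_cast Nat.pos_of_ne_zero hm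
  have hroot : (m : ℝ) ^ (m : ℝ)⁻¹ ≤ 2 := by
    rw [Real.rpow_inv_le_iff_of_pos hm0.le zero_le_two hm0, Real.rpow_natCast]
    exact_mod_cast m.lt_two_pow_self.le
  calc
    √((m : ℝ) / 2) ≤ √(m / (m : ℝ) ^ (m : ℝ)⁻¹) := by gcongr
    _ = √((m : ℝ) ^ (1 - (m : ℝ)⁻¹)) := by rw [Real.rpow_sub hm0, Real.rpow_one]
    _ = (m : ℝ) ^ (((m : ℝ) - 1) / (2 * m)) := by
      rw [Real.sqrt_eq_rpow, ← Real.rpow_mul hm0.le]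
      congr 1
      field_simp

theorem weighted_bohnenblust_hille_general {ι : Type*} [Fintype ι] (m : ℕ) (hm : 2 ≤ m)
    (Λ : Finset (ι → ℕ)) (hΛ : ∀ α ∈ Λ, ∑ j, α j = m) (c : (ι → ℕ) → ℂ) :
    (∑ α ∈ Λ, (‖c α‖ / √(∏ j, ((α j : ℝ) + 1))) ^ ((2 * m : ℝ) / (m + 1))) ^
        (((m : ℝ) + 1) / (2 * m)) ≤
      √(m / 2) * ((m : ℝ) / (m - 1)) ^ (m - 1) *
        ⨆ z ∈ {z : ι → ℂ | ∀ j, ‖z j‖ ≤ 1}, ‖∑ α ∈ Λ, c α * ∏ j, z j ^ α j‖ := by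
  have hpolydisc : {z : ι → ℂ | ∀ j, ‖z j‖ ≤ 1} = Metric.closedBall 0 1 := by
    ext z
    simp [pi_norm_le_iff_of_nonneg]
  have hsup (z : ι → ℂ) (hz : ‖z‖ ≤ 1) : ‖eval z (ofCoeffs Λ c)‖ ≤
      ⨆ z ∈ Metric.closedBall (0 : ι → ℂ) 1, ‖eval z (ofCoeffs Λ c)‖ :=
    le_biSup_of_isCompact (isCompact_closedBall 0 1) (continuous_eval _).norm.continuousOn
      (mem_closedBall_zero_iff.mpr hz)
  have h := rpow_sum_norm_coeff_div_sqrt_rpow_le hm (isHomogeneous_ofCoeffs c hΛ) hsup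
  have hzero (α : ι → ℕ) :
      (‖(0 : ℂ)‖ / √(∏ j, ((α j : ℝ) + 1))) ^ ((2 * m : ℝ) / (m + 1)) = 0 := by
    rw [norm_zero, zero_div, Real.zero_rpow (by positivity)]
  rw [hpolydisc]
  simpa only [eval_ofCoeffs, sum_support_ofCoeffs c (g := fun α x =>
    (‖x‖ / √(∏ j, ((α j : ℝ) + 1))) ^ ((2 * m : ℝ) / (m + 1))) hzero] using h

end BohnenblustHille

/-- **Main theorem (weighted Bohnenblust–Hille inequality).**
For `m ≥ 2`, `N ≥ 1`, an index set `Λ` of multi-indices `α ∈ ℕ₀^N` with `|α| = m`,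
and complex numbers `(c_α)_{α ∈ Λ}`:
`(∑_{α∈Λ} (|c_α|/√(α+1))^{2m/(m+1)})^{(m+1)/(2m)}
  ≤ m^{(m-1)/(2m)} (m/(m-1))^{m-1} · sup_{z ∈ closed unit polydisc} |∑_{α∈Λ} c_α z^α|`. -/
theorem weighted_bohnenblust_hille (m N : ℕ) (hm : 2 ≤ m) (hN : 1 ≤ N)
    (Λ : Finset (Fin N → ℕ)) (hΛ : ∀ α ∈ Λ, ∑ j, α j = m)
    (c : (Fin N → ℕ) → ℂ) :
    (∑ α ∈ Λ, (‖c α‖ / Real.sqrt (∏ j, ((α j : ℝ) + 1)))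
        ^ ((2 * m : ℝ) / (m + 1))) ^ (((m : ℝ) + 1) / (2 * m))
      ≤ (m : ℝ) ^ (((m : ℝ) - 1) / (2 * m)) * ((m : ℝ) / ((m : ℝ) - 1)) ^ (m - 1) *
        ⨆ z ∈ {z : Fin N → ℂ | ∀ j, ‖z j‖ ≤ 1},
          ‖∑ α ∈ Λ, c α * ∏ j, z j ^ α j‖ := by
  refine (weighted_bohnenblust_hille_general m hm Λ hΛ c).trans ?_
  have hm1 : (1 : ℝ) ≤ m := mod_cast one_le_two.trans hm
  gcongr
  · exact Real.iSup_nonneg fun z => Real.iSup_nonneg fun _ => norm_nonneg _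
  · exact sqrt_half_le_rpow (by positivity)
end

section
/- Let m, M, N ≥ 1 and let α ∈ ℕ₀^N be a multi-index with |α| = m such that at most M of the coordinates α_j are nonzero (i.e. var(α) ≤ M). Then ∏_{j=1}^N (α_j + 1) ≤ (m/M + 1)^M. -/
open Finset

/-! By AM-GM over the support of `α`, the product is at most `(m/k + 1)^k`, where `k ≤ M` is the
size of the support; by Bernoulli's inequality `(m/n + 1)^n` increases with `n`, so `k` may be
replaced by `M`. -/

theorem prod_le_sum_div_card_pow_card {ι : Type*} (s : Finset ι) (z : ι → ℝ)
    (hz : ∀ i ∈ s, 0 ≤ z i) : ∏ i ∈ s, z i ≤ ((∑ i ∈ s, z i) / #s) ^ #s := by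
  obtain rfl | hs := s.eq_empty_or_nonempty
  · simp
  have hcard : 0 < (#s : ℝ) := mod_cast hs.card_pos
  have amgm : (∏ i ∈ s, z i) ^ (#s : ℝ)⁻¹ ≤ (∑ i ∈ s, z i) / #s := by
    simpa using Real.geom_mean_le_arith_mean s (fun _ ↦ 1) z (by simp) (by simpa using hs) hz
  rwa [Real.rpow_inv_le_iff_of_pos (prod_nonneg hz) (div_nonneg (sum_nonneg hz) hcard.le) hcard,
    Real.rpow_natCast] at amgm

theorem div_add_one_pow_le_div_add_one_pow {x : ℝ} {k n : ℕ} (hx : -(k : ℝ) ≤ x) (hkn : k ≤ n) :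
    (x / k + 1) ^ k ≤ (x / n + 1) ^ n := by
  obtain rfl | hk := k.eq_zero_or_pos
  · have hx₀ : 0 ≤ x := by simpa using hx
    simpa using one_le_pow₀ (le_add_of_nonneg_left (div_nonneg hx₀ n.cast_nonneg))
  have hk₀ : 0 < (k : ℝ) := mod_cast hk
  have hkn' : (k : ℝ) ≤ n := mod_cast hkn
  have hn₀ : 0 < (n : ℝ) := hk₀.trans_le hkn'
  have hxk : -1 ≤ x / k := by rw [le_div_iff₀ hk₀]; linarith
  have hxn : -1 ≤ x / n := by rw [le_div_iff₀ hn₀]; linarith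
  have bernoulli : x / k + 1 ≤ (x / n + 1) ^ ((n : ℝ) / k) :=
    calc x / k + 1 = 1 + n / k * (x / n) := by field_simp; ring
      _ ≤ (1 + x / n) ^ ((n : ℝ) / k) :=
        one_add_mul_self_le_rpow_one_add hxn ((one_le_div₀ hk₀).2 hkn')
      _ = (x / n + 1) ^ ((n : ℝ) / k) := by rw [add_comm]
  calc (x / k + 1) ^ k ≤ ((x / n + 1) ^ ((n : ℝ) / k)) ^ k :=
        pow_le_pow_left₀ (by linarith) bernoulli k
    _ = (x / n + 1) ^ n := by
        rw [← Real.rpow_mul_natCast (by linarith), div_mul_cancel₀ _ hk₀.ne', Real.rpow_natCast]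

theorem prod_add_one_le_sum_div_card_add_one_pow {ι : Type*} (s : Finset ι) (α : ι → ℝ)
    (hα : ∀ j ∈ s, -1 ≤ α j) : ∏ j ∈ s, (α j + 1) ≤ ((∑ j ∈ s, α j) / #s + 1) ^ #s := by
  obtain rfl | hs := s.eq_empty_or_nonempty
  · simp
  have hcard : (#s : ℝ) ≠ 0 := mod_cast hs.card_ne_zero
  calc ∏ j ∈ s, (α j + 1) ≤ ((∑ j ∈ s, (α j + 1)) / #s) ^ #s :=
        prod_le_sum_div_card_pow_card s _ fun j hj ↦ by linarith [hα j hj]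
    _ = ((∑ j ∈ s, α j) / #s + 1) ^ #s := by
        rw [sum_add_distrib, sum_const, nsmul_one, add_div, div_self hcard]

theorem prod_add_one_le_of_var_le_general {ι : Type*} {M : ℕ} (s : Finset ι) (α : ι → ℝ)
    (hα : ∀ j ∈ s, -1 ≤ α j) (hvar : #{j ∈ s | α j ≠ 0} ≤ M) :
    ∏ j ∈ s, (α j + 1) ≤ ((∑ j ∈ s, α j) / M + 1) ^ M := by
  set t := {j ∈ s | α j ≠ 0}
  have hα' : ∀ j ∈ t, -1 ≤ α j := fun j hj ↦ hα j (mem_of_mem_filter j hj)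
  have hsum : -(#t : ℝ) ≤ ∑ j ∈ t, α j := by
    simpa using t.card_nsmul_le_sum α (-1) hα'
  calc ∏ j ∈ s, (α j + 1) = ∏ j ∈ t, (α j + 1) :=
        (prod_filter_of_ne fun j _ hj ↦ by simpa using hj).symm
    _ ≤ ((∑ j ∈ t, α j) / #t + 1) ^ #t := prod_add_one_le_sum_div_card_add_one_pow t α hα'
    _ ≤ ((∑ j ∈ t, α j) / M + 1) ^ M := div_add_one_pow_le_div_add_one_pow hsum hvar
    _ = ((∑ j ∈ s, α j) / M + 1) ^ M := by rw [sum_filter_ne_zero]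

/-- If `α ∈ ℕ₀^N` is a multi-index with `|α| = m` involving at most `M` variables
(`var(α) = card{j : α_j ≠ 0} ≤ M`), then `∏_j (α_j + 1) ≤ (m/M + 1)^M`. -/
theorem prod_add_one_le_of_var_le (m M N : ℕ) (hm : 1 ≤ m) (hM : 1 ≤ M) (hN : 1 ≤ N)
    (α : Fin N → ℕ) (hα : ∑ j, α j = m)
    (hvar : (Finset.univ.filter fun j => α j ≠ 0).card ≤ M) :
    ∏ j, ((α j : ℝ) + 1) ≤ ((m : ℝ) / M + 1) ^ M := by
  simpa [← hα] using prod_add_one_le_of_var_le_general univ (fun j ↦ (α j : ℝ))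
    (fun j _ ↦ by linarith [(α j).cast_nonneg (α := ℝ)]) (by simpa using hvar)
end

section
/- Let m ≥ 2 and M, N ≥ 1, and set Λ_{N,M} = {α ∈ ℕ₀^N : |α| = m and var(α) ≤ M}. Then for all complex numbers (c_α)_{α ∈ Λ_{N,M}} one has (∑_{α ∈ Λ_{N,M}} |c_α|^{2m/(m+1)})^{(m+1)/(2m)} ≤ e · 2^{M/2} · m^{(M+1)/2} · sup_{z ∈ closed unit polydisc of ℂ^N} |∑_{α ∈ Λ_{N,M}} c_α z^α|. In particular the constant has polynomial growth in m and does not depend on N. -/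
open Finset

/-!
Blei's inequality for the symmetric array attached to `P = ∑ c_α z^α` bounds the
`ℓ^{2m/(m+1)}` norm of the coefficients by `∑ⱼ (∑_α (αⱼ/m) |c_α|²)^{1/2}`, hence, as
`αⱼ/m ≤ m (αⱼ/m)²`, by `√m ∑ⱼ (∑_α |αⱼ c_α / m|²)^{1/2}`. The inner sums are the `L²` norms of
`zⱼ ∂ⱼP / m`.

In one variable, testing a polynomial of degree `m` against a unimodular function built from a
Möbius transformation gives `|a₀|² + |aₖ|²/2 ≤ ‖·‖₁²` for `1 ≤ k ≤ m`. The average of these over `k`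
is an `L²`–`L¹` inequality with weight `1/(2m)` on the nonconstant coefficients; by Minkowski's
inequality it tensorizes, and a monomial in at most `M` variables loses at most `(2m)^{M/2}`.

Finally `∑ⱼ |zⱼ ∂ⱼP / m|` is at most `e · sup |P|` on the polydisc, by Cauchy's estimate on a disc
of radius `1/m` together with homogeneity, since `(1 + 1/m)^m ≤ e`.
-/

section Blei

variable {ι κ : Type*}

lemma sum_rpow_mul_prod_rpow_le (s : Finset κ) (t : Finset ι) {g : κ → ℝ} {f : ι → κ → ℝ}
    (hg : ∀ a ∈ s, 0 ≤ g a) (hf : ∀ i ∈ t, ∀ a ∈ s, 0 ≤ f i a) {q : ℝ} {w : ι → ℝ}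
    (hq : 0 ≤ q) (hw : ∀ i ∈ t, 0 ≤ w i) (hqw : q + ∑ i ∈ t, w i = 1) :
    ∑ a ∈ s, g a ^ q * ∏ i ∈ t, f i a ^ w i ≤
      (∑ a ∈ s, g a) ^ q * ∏ i ∈ t, (∑ a ∈ s, f i a) ^ w i := by
  let : MeasurableSpace κ := ⊤
  have key := ENNReal.lintegral_mul_prod_norm_pow_le
    (μ := MeasureTheory.Measure.count.restrict (s : Set κ)) t
    (g := fun a => ENNReal.ofReal (g a)) (f := fun i a => ENNReal.ofReal (f i a))
    measurable_from_top.aemeasurable (fun _ _ => measurable_from_top.aemeasurable) q hqw hq hw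
  simp only [MeasureTheory.lintegral_finset, MeasureTheory.Measure.count_singleton, mul_one] at key
  have sum_ofReal {h : κ → ℝ} {r : ℝ} (hh : ∀ a ∈ s, 0 ≤ h a) (hr : 0 ≤ r) :
      (∑ a ∈ s, ENNReal.ofReal (h a)) ^ r = ENNReal.ofReal ((∑ a ∈ s, h a) ^ r) := by
    rw [← ENNReal.ofReal_sum_of_nonneg hh, ENNReal.ofReal_rpow_of_nonneg (sum_nonneg hh) hr]
  have hprod (a) (ha : a ∈ s) : 0 ≤ ∏ i ∈ t, f i a ^ w i :=
    prod_nonneg fun i hi => Real.rpow_nonneg (hf i hi a ha) _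
  have hterm (a) (ha : a ∈ s) : ENNReal.ofReal (g a) ^ q * ∏ i ∈ t, ENNReal.ofReal (f i a) ^ w i =
      ENNReal.ofReal (g a ^ q * ∏ i ∈ t, f i a ^ w i) := by
    rw [ENNReal.ofReal_mul' (hprod a ha), ENNReal.ofReal_rpow_of_nonneg (hg a ha) hq,
      ENNReal.ofReal_prod_of_nonneg fun i hi => Real.rpow_nonneg (hf i hi a ha) _]
    exact congrArg _ <| prod_congr rfl fun i hi =>
      ENNReal.ofReal_rpow_of_nonneg (hf i hi a ha) (hw i hi)
  have hbound : ∀ i ∈ t, 0 ≤ (∑ a ∈ s, f i a) ^ w i := fun i hi =>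
    Real.rpow_nonneg (sum_nonneg (hf i hi)) _
  rw [sum_congr rfl hterm,
    ← ENNReal.ofReal_sum_of_nonneg fun a ha =>
      mul_nonneg (Real.rpow_nonneg (hg a ha) _) (hprod a ha),
    sum_ofReal hg hq, prod_congr rfl fun i hi => sum_ofReal (hf i hi) (hw i hi),
    ← ENNReal.ofReal_prod_of_nonneg hbound, ← ENNReal.ofReal_mul' (prod_nonneg hbound)] at key
  exact (ENNReal.ofReal_le_ofReal_iff <| mul_nonneg (Real.rpow_nonneg (sum_nonneg hg) _)
    (prod_nonneg hbound)).mp key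

lemma sum_sq_sum_le_sq_sum_sqrt [Fintype ι] [Fintype κ] (a : ι → κ → ℝ) :
    ∑ j, (∑ l, a l j) ^ 2 ≤ (∑ l, √(∑ j, a l j ^ 2)) ^ 2 := by
  have h := norm_sum_le univ fun l => WithLp.toLp 2 (a l)
  simp only [EuclideanSpace.norm_eq, WithLp.ofLp_sum, Finset.sum_apply, Real.norm_eq_abs,
    sq_abs] at h
  simpa only [Real.sq_sqrt (sum_nonneg fun _ _ => sq_nonneg _)] using
    pow_le_pow_left₀ (Real.sqrt_nonneg _) h 2

lemma sum_rpow_le_interpolate [Fintype κ] (m : ℕ) {y : κ → ℝ} (hy : ∀ i, 0 ≤ y i) :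
    ∑ i, y i ^ (2 * (m + 1) / (m + 2) : ℝ) ≤ (∑ i, y i ^ 2) ^ (1 / (m + 2) : ℝ) *
      (∑ i, y i ^ (2 * m / (m + 1) : ℝ)) ^ ((m + 1) / (m + 2) : ℝ) := by
  have h := sum_rpow_mul_prod_rpow_le univ (univ : Finset Unit) (g := fun i => y i ^ 2)
    (f := fun _ i => y i ^ (2 * m / (m + 1) : ℝ)) (q := 1 / (m + 2))
    (w := fun _ => (m + 1) / (m + 2)) (fun i _ => sq_nonneg _)
    (fun _ _ i _ => Real.rpow_nonneg (hy i) _) (by positivity) (fun _ _ => by positivity)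
    (by simp only [sum_const, card_univ, Fintype.card_unit, one_smul]; field_simp; ring)
  simp only [univ_unique, prod_singleton] at h
  refine (sum_congr rfl fun i _ => ?_).trans_le h
  rw [← Real.rpow_natCast, ← Real.rpow_mul (hy i), ← Real.rpow_mul (hy i),
    ← Real.rpow_add_of_nonneg (hy i) (by positivity) (by positivity)]
  congr 1
  push_cast
  field_simp
  ring

lemma sq_rpow_one_div {s : ℝ} (hs : 0 ≤ s) (r : ℝ) : (s ^ 2) ^ (1 / r) = s ^ (2 / r) := by
  rw [← Real.rpow_natCast, ← Real.rpow_mul hs, Nat.cast_ofNat, mul_one_div]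

lemma sum_rpow_le_mul_prod_of_sum_rpow_le_prod [Fintype κ] {m : ℕ} {y : κ → ℝ} {B : Fin m → ℝ}
    (hy : ∀ i, 0 ≤ y i) (hB : ∀ k, 0 ≤ B k)
    (h : ∑ i, y i ^ (2 * m / (m + 1) : ℝ) ≤ ∏ k, B k ^ (2 / (m + 1) : ℝ)) :
    ∑ i, y i ^ (2 * (m + 1) / (m + 2) : ℝ) ≤
      √(∑ i, y i ^ 2) ^ (2 / (m + 2) : ℝ) * ∏ k, (B k ^ 2) ^ (1 / (m + 2) : ℝ) := by
  refine (sum_rpow_le_interpolate m hy).trans ?_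
  rw [← sq_rpow_one_div (Real.sqrt_nonneg _), Real.sq_sqrt (sum_nonneg fun _ _ => sq_nonneg _)]
  refine mul_le_mul_of_nonneg_left ?_ (by positivity)
  refine (Real.rpow_le_rpow (sum_nonneg fun i _ => Real.rpow_nonneg (hy i) _) h
    (by positivity)).trans_eq ?_
  rw [← Real.finsetProd_rpow _ _ fun k _ => Real.rpow_nonneg (hB k) _]
  refine prod_congr rfl fun k _ => ?_
  rw [sq_rpow_one_div (hB k), ← Real.rpow_mul (hB k)]
  congr 1
  field_simp

lemma sum_fin_succ_tuple [Fintype ι] {R : Type*} [AddCommMonoid R] {m : ℕ}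
    (f : (Fin (m + 1) → ι) → R) :
    ∑ i, f i = ∑ l, ∑ i : Fin m → ι, f (Fin.cons l i) := by
  rw [← (Fin.consEquiv fun _ => ι).sum_comp, Fintype.sum_prod_type]
  rfl

variable [Fintype ι] [DecidableEq ι] {m : ℕ}

/-- The mixed `(ℓ¹, ℓ²)` norm of an array `x` with `m` indices: `ℓ¹` in the `k`-th index and `ℓ²`
in the others. -/
noncomputable def mixedNorm (k : Fin m) (x : (Fin m → ι) → ℝ) : ℝ :=
  ∑ l, √(∑ i with i k = l, x i ^ 2)

lemma mixedNorm_nonneg (k : Fin m) (x : (Fin m → ι) → ℝ) : 0 ≤ mixedNorm k x :=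
  sum_nonneg fun _ _ => Real.sqrt_nonneg _

lemma mixedNorm_zero (x : (Fin (m + 1) → ι) → ℝ) :
    mixedNorm 0 x = ∑ l, √(∑ i, x (Fin.cons l i) ^ 2) := by
  refine sum_congr rfl fun l _ => congrArg _ ?_
  rw [sum_filter, sum_fin_succ_tuple, sum_comm]
  simp only [Fin.cons_zero, sum_ite_eq', mem_univ, if_true]

lemma sum_sq_mixedNorm_cons_le (k : Fin m) (x : (Fin (m + 1) → ι) → ℝ) :
    ∑ j, (mixedNorm k fun i => x (Fin.cons j i)) ^ 2 ≤ mixedNorm k.succ x ^ 2 := by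
  refine (sum_sq_sum_le_sq_sum_sqrt _).trans_eq ?_
  refine congrArg (· ^ 2) <| sum_congr rfl fun l _ => congrArg _ ?_
  rw [sum_filter, sum_fin_succ_tuple]
  refine sum_congr rfl fun j _ => ?_
  rw [Real.sq_sqrt (sum_nonneg fun _ _ => sq_nonneg _), sum_filter]
  simp only [Fin.cons_succ]

theorem sum_rpow_le_prod_mixedNorm (m : ℕ) {x : (Fin m → ι) → ℝ} (hx : ∀ i, 0 ≤ x i) :
    ∑ i, x i ^ (2 * m / (m + 1) : ℝ) ≤ ∏ k, mixedNorm k x ^ (2 / (m + 1) : ℝ) := by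
  induction m with
  | zero => simp
  | succ m ih =>
    have hslice (l : ι) := sum_rpow_le_mul_prod_of_sum_rpow_le_prod (fun i => hx (Fin.cons l i))
      (fun k => mixedNorm_nonneg k _) (ih fun i => hx (Fin.cons l i))
    have hexp : ((m + 1 : ℕ) : ℝ) + 1 = m + 2 := by push_cast; ring
    rw [hexp, Nat.cast_succ]
    calc ∑ i, x i ^ (2 * (m + 1) / (m + 2) : ℝ)
      _ = ∑ l, ∑ i, x (Fin.cons l i) ^ (2 * (m + 1) / (m + 2) : ℝ) := sum_fin_succ_tuple _
      _ ≤ ∑ l, √(∑ i, x (Fin.cons l i) ^ 2) ^ (2 / (m + 2) : ℝ) *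
          ∏ k, ((mixedNorm k fun i => x (Fin.cons l i)) ^ 2) ^ (1 / (m + 2) : ℝ) :=
        sum_le_sum fun l _ => hslice l
      _ ≤ (∑ l, √(∑ i, x (Fin.cons l i) ^ 2)) ^ (2 / (m + 2) : ℝ) *
          ∏ k, (∑ l, (mixedNorm k fun i => x (Fin.cons l i)) ^ 2) ^ (1 / (m + 2) : ℝ) := by
        refine sum_rpow_mul_prod_rpow_le univ univ (fun _ _ => Real.sqrt_nonneg _)
          (fun _ _ _ _ => sq_nonneg _) (by positivity) (fun _ _ => by positivity) ?_
        simp only [sum_const, card_univ, Fintype.card_fin, nsmul_eq_mul]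
        field_simp
        ring
      _ ≤ mixedNorm 0 x ^ (2 / (m + 2) : ℝ) *
          ∏ k : Fin m, (mixedNorm k.succ x ^ 2) ^ (1 / (m + 2) : ℝ) := by
        rw [mixedNorm_zero]
        gcongr with k
        exact sum_sq_mixedNorm_cons_le k x
      _ = ∏ k, mixedNorm k x ^ (2 / (m + 2) : ℝ) := by
        rw [Fin.prod_univ_succ]
        simp only [sq_rpow_one_div (mixedNorm_nonneg _ x)]

end Blei

section SymmetricArrays

variable {ι : Type*} [Fintype ι] [DecidableEq ι] {m : ℕ}

/-- The exponent `α` of the monomial `z^α = ∏ k, z (i k)`, which identifies tuples up to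
permutation with multi-indices of degree `m`. -/
def multiIndex (i : Fin m → ι) (j : ι) : ℕ := #{k | i k = j}

/-- The number of tuples giving rise to the multi-index `α`, that is `m! / α!` if `α` has
degree `m`. -/
def tupleCount (m : ℕ) (α : ι → ℕ) : ℕ := #{i : Fin m → ι | multiIndex i = α}

omit [Fintype ι] in
lemma multiIndex_comp_perm (i : Fin m → ι) (σ : Equiv.Perm (Fin m)) :
    multiIndex (i ∘ σ) = multiIndex i := by
  funext j
  simp only [multiIndex, card_filter]
  exact Equiv.sum_comp σ fun k => if i k = j then 1 else 0

lemma tupleCount_pos {α : ι → ℕ} (hα : ∑ j, α j = m) : 0 < tupleCount m α := by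
  let e : (Σ j, Fin (α j)) ≃ Fin m := Fintype.equivFinOfCardEq (by simpa using hα)
  refine card_pos.mpr ⟨fun k => (e.symm k).1, mem_filter.mpr ⟨mem_univ _, funext fun j => ?_⟩⟩
  calc #{k | (e.symm k).1 = j}
    _ = ∑ s : Σ j, Fin (α j), if s.1 = j then 1 else 0 := by
      rw [card_filter, e.symm.sum_comp fun s : Σ j, Fin (α j) => if s.1 = j then 1 else 0]
    _ = ∑ l, ∑ _s : Fin (α l), if l = j then 1 else 0 := Fintype.sum_sigma _
    _ = α j := by simp

lemma card_multiIndex_eq_and_apply_eq (α : ι → ℕ) (j : ι) (k l : Fin m) :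
    #{i : Fin m → ι | multiIndex i = α ∧ i k = j} =
      #{i : Fin m → ι | multiIndex i = α ∧ i l = j} :=
  card_equiv ((Equiv.swap k l).arrowCongr (Equiv.refl ι)) fun i => by
    have : multiIndex ((Equiv.swap k l).arrowCongr (Equiv.refl ι) i) = multiIndex i :=
      multiIndex_comp_perm i (Equiv.swap k l)
    simp [this]

lemma mul_card_multiIndex_eq_and_apply_eq (α : ι → ℕ) (j : ι) (k : Fin m) :
    m * #{i : Fin m → ι | multiIndex i = α ∧ i k = j} = tupleCount m α * α j := by
  calc m * #{i : Fin m → ι | multiIndex i = α ∧ i k = j}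
    _ = ∑ l : Fin m, #{i : Fin m → ι | multiIndex i = α ∧ i l = j} := by
      rw [sum_congr rfl fun l _ => card_multiIndex_eq_and_apply_eq α j l k, sum_const,
        card_univ, Fintype.card_fin, smul_eq_mul]
    _ = ∑ i : Fin m → ι with multiIndex i = α, multiIndex i j := by
      simp only [multiIndex, ← filter_filter, card_filter]
      exact sum_comm
    _ = tupleCount m α * α j :=
      sum_const_nat fun i hi => congrFun (mem_filter.mp hi).2 j

lemma sum_ite_multiIndex_mem (s : Finset (Fin m → ι)) (Λ : Finset (ι → ℕ)) (f : (ι → ℕ) → ℝ) :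
    ∑ i ∈ s, (if multiIndex i ∈ Λ then f (multiIndex i) else 0) =
      ∑ α ∈ Λ, #{i ∈ s | multiIndex i = α} * f α := by
  simp only [card_filter, Nat.cast_sum, Nat.cast_ite, Nat.cast_one, Nat.cast_zero, sum_mul,
    ite_mul, one_mul, zero_mul]
  rw [sum_comm]
  simp only [sum_ite_eq]

lemma mul_rpow_neg_inv_sq_le {w b p : ℝ} (hw : 1 ≤ w) (hp : 0 < p) (hp2 : p ≤ 2) :
    w * (b * w ^ (-p⁻¹)) ^ 2 ≤ b ^ 2 := by
  have hw0 : 0 < w := one_pos.trans_le hw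
  have hexp : w * (w ^ (-p⁻¹)) ^ 2 = w ^ (1 - 2 / p) := by
    rw [← Real.rpow_natCast, ← Real.rpow_mul hw0.le, sub_eq_add_neg, Real.rpow_add hw0,
      Real.rpow_one]
    congr 2
    push_cast
    ring
  rw [mul_pow, mul_left_comm, hexp]
  refine mul_le_of_le_one_right (sq_nonneg b) (Real.rpow_le_one_of_one_le_of_nonpos hw ?_)
  rwa [sub_nonpos, one_le_div hp]

theorem sum_tupleCount_mul_rpow_le (hm : m ≠ 0) (Λ : Finset (ι → ℕ)) {y : (ι → ℕ) → ℝ}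
    (hy : ∀ α, 0 ≤ y α) :
    ∑ α ∈ Λ, tupleCount m α * y α ^ (2 * m / (m + 1) : ℝ) ≤
      (∑ j, √(∑ α ∈ Λ, α j / m * (tupleCount m α * y α ^ 2))) ^ (2 * m / (m + 1) : ℝ) := by
  have hm0 : (0 : ℝ) < m := by positivity
  set T := ∑ j, √(∑ α ∈ Λ, α j / m * (tupleCount m α * y α ^ 2))
  let x (i : Fin m → ι) : ℝ := if multiIndex i ∈ Λ then y (multiIndex i) else 0
  have hx (i) : 0 ≤ x i := by simp only [x]; split_ifs; exacts [hy _, le_rfl]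
  have hx_sq (i) : x i ^ 2 = if multiIndex i ∈ Λ then y (multiIndex i) ^ 2 else 0 := by
    simp only [x, apply_ite (· ^ 2), ne_eq, two_ne_zero, not_false_eq_true, zero_pow]
  have hx_rpow (i) : x i ^ (2 * m / (m + 1) : ℝ) =
      if multiIndex i ∈ Λ then y (multiIndex i) ^ (2 * m / (m + 1) : ℝ) else 0 := by
    simp only [x, apply_ite (· ^ (2 * m / (m + 1) : ℝ))]
    rw [Real.zero_rpow (by positivity)]
  have hcard (α : ι → ℕ) (j : ι) (k : Fin m) :
      (#{i : Fin m → ι | i k = j ∧ multiIndex i = α} : ℝ) = α j / m * tupleCount m α := by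
    rw [div_mul_eq_mul_div, eq_div_iff hm0.ne', mul_comm, mul_comm (α j : ℝ)]
    simp only [and_comm (b := multiIndex _ = α)]
    exact_mod_cast mul_card_multiIndex_eq_and_apply_eq α j k
  have hmixed (k : Fin m) : mixedNorm k x = T := by
    refine sum_congr rfl fun j _ => congrArg _ ?_
    rw [sum_congr rfl fun i _ => hx_sq i, sum_ite_multiIndex_mem _ Λ fun α => y α ^ 2]
    refine sum_congr rfl fun α _ => ?_
    rw [filter_filter, hcard, mul_assoc]
  have hT : 0 ≤ T := sum_nonneg fun _ _ => Real.sqrt_nonneg _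
  calc ∑ α ∈ Λ, tupleCount m α * y α ^ (2 * m / (m + 1) : ℝ)
    _ = ∑ i, x i ^ (2 * m / (m + 1) : ℝ) := by
      rw [sum_congr rfl fun i _ => hx_rpow i]
      exact (sum_ite_multiIndex_mem univ Λ fun α => y α ^ (2 * m / (m + 1) : ℝ)).symm
    _ ≤ ∏ k, mixedNorm k x ^ (2 / (m + 1) : ℝ) := sum_rpow_le_prod_mixedNorm m hx
    _ = T ^ (2 * m / (m + 1) : ℝ) := by
      simp only [hmixed, prod_const, card_univ, Fintype.card_fin]
      rw [← Real.rpow_natCast, ← Real.rpow_mul hT, div_mul_eq_mul_div]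

omit [DecidableEq ι] in
theorem rpow_sum_rpow_le_sum_sqrt (hm : m ≠ 0) {Λ : Finset (ι → ℕ)}
    (hΛ : ∀ α ∈ Λ, ∑ j, α j = m) {b : (ι → ℕ) → ℝ} (hb : ∀ α, 0 ≤ b α) :
    (∑ α ∈ Λ, b α ^ (2 * m / (m + 1) : ℝ)) ^ ((m + 1) / (2 * m) : ℝ) ≤
      ∑ j, √(∑ α ∈ Λ, α j / m * b α ^ 2) := by
  classical
  have hp0 : (0 : ℝ) < 2 * m / (m + 1) := by positivity
  have hp2 : (2 * m / (m + 1) : ℝ) ≤ 2 := by rw [div_le_iff₀ (by positivity)]; linarith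
  have hBlei := sum_tupleCount_mul_rpow_le hm Λ
    (y := fun α => b α * (tupleCount m α : ℝ) ^ (-(2 * m / (m + 1) : ℝ)⁻¹))
    fun α => mul_nonneg (hb α) (by positivity)
  rw [← inv_div (2 * m : ℝ), Real.rpow_inv_le_iff_of_pos
    (sum_nonneg fun α _ => Real.rpow_nonneg (hb α) _)
    (sum_nonneg fun _ _ => Real.sqrt_nonneg _) hp0]
  calc ∑ α ∈ Λ, b α ^ (2 * m / (m + 1) : ℝ)
    _ = ∑ α ∈ Λ, tupleCount m α *
        (b α * (tupleCount m α : ℝ) ^ (-(2 * m / (m + 1) : ℝ)⁻¹)) ^ (2 * m / (m + 1) : ℝ) := by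
      refine sum_congr rfl fun α hα => ?_
      have hw : (0 : ℝ) < tupleCount m α := by exact_mod_cast tupleCount_pos (hΛ α hα)
      rw [Real.mul_rpow (hb α) (by positivity), ← Real.rpow_mul hw.le, neg_mul,
        inv_mul_cancel₀ hp0.ne', Real.rpow_neg_one, mul_left_comm, mul_inv_cancel₀ hw.ne', mul_one]
    _ ≤ _ := hBlei
    _ ≤ (∑ j, √(∑ α ∈ Λ, α j / m * b α ^ 2)) ^ (2 * m / (m + 1) : ℝ) := by
      gcongr with j _ α hα
      exact mul_rpow_neg_inv_sq_le (by exact_mod_cast tupleCount_pos (hΛ α hα)) hp0 hp2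

end SymmetricArrays

section OneVariable

open Polynomial Real ComplexConjugate

lemma norm_circleAverage_le {E : Type*} [NormedAddCommGroup E] [NormedSpace ℝ E] (f : ℂ → E)
    (c : ℂ) (R : ℝ) : ‖circleAverage f c R‖ ≤ circleAverage (fun z => ‖f z‖) c R := by
  rw [circleAverage, circleAverage, norm_smul, smul_eq_mul, norm_of_nonneg (by positivity)]
  gcongr
  exact intervalIntegral.norm_integral_le_integral_norm (by positivity)

lemma circleIntegrable_zero_one {E : Type*} [NormedAddCommGroup E] {f : ℂ → E}
    (hf : ∀ z, ‖z‖ = 1 → ContinuousAt f z) : CircleIntegrable f 0 1 :=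
  ContinuousOn.circleIntegrable zero_le_one fun z hz =>
    (hf z (mem_sphere_zero_iff_norm.mp hz)).continuousWithinAt

lemma circleAverage_inv_pow_mul_eval (P : ℂ[X]) (k : ℕ) :
    circleAverage (fun z => (z ^ k)⁻¹ * P.eval z) 0 1 = P.coeff k := by
  have : Fact (0 < 2 * π) := ⟨two_pi_pos⟩
  rw [← P.fourierCoeff_toAddCircle_natCast k, fourierCoeff_eq_intervalIntegral _ _ 0, zero_add,
    circleAverage, one_div]
  congr 1
  refine intervalIntegral.integral_congr fun θ _ => ?_
  have hfourier : fourier (-k) (θ : AddCircle (2 * π)) = (circleMap 0 1 θ ^ k)⁻¹ := by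
    rw [fourier_coe_apply, circleMap_zero, Complex.ofReal_one, one_mul, ← Complex.exp_nat_mul,
      ← Complex.exp_neg]
    congr 1
    push_cast
    field_simp
  have heval : P.toAddCircle (θ : AddCircle (2 * π)) = P.eval (circleMap 0 1 θ) := by
    simp [toAddCircle, circleMap, AddCircle.toCircle]
  simp only [hfourier, heval, smul_eq_mul]

lemma norm_coeff_le_circleAverage (P : ℂ[X]) (k : ℕ) :
    ‖P.coeff k‖ ≤ circleAverage (fun z => ‖P.eval z‖) 0 1 := by
  rw [← circleAverage_inv_pow_mul_eval]
  refine (norm_circleAverage_le _ _ _).trans_eq (circleAverage_congr_sphere fun z hz => ?_)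
  have hz : ‖z‖ = 1 := by simpa using hz
  simp only [norm_mul, norm_inv, norm_pow, hz, one_pow, inv_one, one_mul]

lemma one_add_mul_ne_zero {y w : ℂ} (hy : ‖y‖ < 1) (hw : ‖w‖ ≤ 1) : 1 + y * w ≠ 0 := by
  intro h
  have : ‖y * w‖ = 1 := by rw [eq_neg_of_add_eq_zero_right h, norm_neg, norm_one]
  rw [norm_mul] at this
  nlinarith [norm_nonneg y, norm_nonneg w]

lemma norm_div_add_div_one_add_conj_mul {y w : ℂ} (hy : ‖y‖ < 1) (hw : ‖w‖ = 1) :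
    ‖y / w + (1 - ‖y‖ ^ 2 : ℝ) / (1 + conj y * w)‖ = 1 := by
  have hden : 1 + conj y * w ≠ 0 := one_add_mul_ne_zero (by rwa [RCLike.norm_conj]) hw.le
  have hw0 : w ≠ 0 := norm_ne_zero_iff.mp (by simp [hw])
  have hconj : conj w * w = 1 := by rw [Complex.conj_mul', hw, Complex.ofReal_one, one_pow]
  have hadd : y + w = conj (1 + conj y * w) * w := by
    rw [map_add, map_one, map_mul, Complex.conj_conj, add_mul, one_mul, mul_assoc, hconj, mul_one,
      add_comm]
  have heq : y / w + (1 - ‖y‖ ^ 2 : ℝ) / (1 + conj y * w) = (y + w) / (w * (1 + conj y * w)) := by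
    rw [div_add_div _ _ hw0 hden]
    push_cast
    rw [← Complex.mul_conj']
    ring
  rw [heq, hadd, norm_div, norm_mul, norm_mul, RCLike.norm_conj, mul_comm]
  exact div_self (mul_ne_zero (norm_ne_zero_iff.mpr hw0) (norm_ne_zero_iff.mpr hden))

lemma circleAverage_eval_div_one_add_mul_pow (P : ℂ[X]) {k : ℕ} (hk : k ≠ 0) {y : ℂ}
    (hy : ‖y‖ < 1) : circleAverage (fun z => P.eval z / (1 + y * z ^ k)) 0 1 = P.coeff 0 := by
  have hd : DifferentiableOn ℂ (fun z => P.eval z / (1 + y * z ^ k)) (Metric.closedBall 0 1) := by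
    refine fun z hz => DifferentiableAt.differentiableWithinAt ?_
    refine P.differentiable.differentiableAt.div (by fun_prop) (one_add_mul_ne_zero hy ?_)
    rw [norm_pow]
    exact pow_le_one₀ (norm_nonneg _) (by simpa using hz)
  rw [DiffContOnCl.circleAverage (by rw [abs_one]; exact hd.diffContOnCl_ball subset_rfl)]
  rw [zero_pow hk, mul_zero, add_zero, div_one, coeff_zero_eq_eval_zero]

-- Pair `P` with the unimodular function `y / w + (1 - ‖y‖ ^ 2) / (1 + conj y * w)`, `w = z ^ k`:
-- it is holomorphic except for the pole `y / w`, so only two coefficients of `P` survive.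
lemma norm_mul_coeff_add_le_circleAverage (P : ℂ[X]) {k : ℕ} (hk : k ≠ 0) {y : ℂ} (hy : ‖y‖ < 1) :
    ‖y * P.coeff k + (1 - ‖y‖ ^ 2 : ℝ) * P.coeff 0‖ ≤ circleAverage (fun z => ‖P.eval z‖) 0 1 := by
  have hy' : ‖conj y‖ < 1 := by rwa [RCLike.norm_conj]
  have hpow {z : ℂ} (hz : ‖z‖ = 1) : ‖z ^ k‖ = 1 := by rw [norm_pow, hz, one_pow]
  have h₁ : CircleIntegrable (fun z => y • ((z ^ k)⁻¹ * P.eval z)) 0 1 :=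
    circleIntegrable_zero_one fun z hz => by
      have : z ^ k ≠ 0 := norm_ne_zero_iff.mp (by simp [hz])
      fun_prop (disch := assumption)
  have h₂ : CircleIntegrable
      (fun z => ((1 - ‖y‖ ^ 2 : ℝ) : ℂ) • (P.eval z / (1 + conj y * z ^ k))) 0 1 :=
    circleIntegrable_zero_one fun z hz => by
      have : 1 + conj y * z ^ k ≠ 0 := one_add_mul_ne_zero hy' (hpow hz).le
      fun_prop (disch := assumption)
  rw [← circleAverage_inv_pow_mul_eval, ← circleAverage_eval_div_one_add_mul_pow P hk hy',
    ← smul_eq_mul y, ← smul_eq_mul (Complex.ofReal _), ← circleAverage_fun_smul,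
    ← circleAverage_fun_smul, ← circleAverage_fun_add h₁ h₂]
  refine (norm_circleAverage_le _ _ _).trans_eq (circleAverage_congr_sphere fun z hz => ?_)
  have hz : ‖z ^ k‖ = 1 := hpow (by simpa using hz)
  have hfactor : y • ((z ^ k)⁻¹ * P.eval z) +
      ((1 - ‖y‖ ^ 2 : ℝ) : ℂ) • (P.eval z / (1 + conj y * z ^ k)) =
      (y / z ^ k + (1 - ‖y‖ ^ 2 : ℝ) / (1 + conj y * z ^ k)) * P.eval z := by
    simp only [smul_eq_mul]
    ring
  simp only [hfactor, norm_mul, norm_div_add_div_one_add_conj_mul hy hz, one_mul]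

lemma sq_norm_coeff_zero_add_half_sq_norm_coeff_le (P : ℂ[X]) {k : ℕ} (hk : k ≠ 0) :
    ‖P.coeff 0‖ ^ 2 + ‖P.coeff k‖ ^ 2 / 2 ≤ circleAverage (fun z => ‖P.eval z‖) 0 1 ^ 2 := by
  set S := circleAverage (fun z => ‖P.eval z‖) 0 1
  obtain hlt | hle := lt_or_ge ‖P.coeff k‖ (2 * ‖P.coeff 0‖)
  · have ha : 0 < ‖P.coeff 0‖ := by linarith [norm_nonneg (P.coeff k)]
    obtain ⟨q, hq⟩ : ∃ q, P.coeff k = 2 * q * P.coeff 0 :=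
      ⟨P.coeff k / (2 * P.coeff 0), by field_simp [norm_pos_iff.mp ha]⟩
    have hnorm : ‖P.coeff k‖ = 2 * ‖q‖ * ‖P.coeff 0‖ := by
      rw [hq, norm_mul, norm_mul, Complex.norm_ofNat]
    have hq_lt : ‖conj q‖ < 1 := by
      rw [RCLike.norm_conj]
      exact lt_of_mul_lt_mul_right (by linarith) ha.le
    have hmobius := norm_mul_coeff_add_le_circleAverage P hk hq_lt
    have hvalue : conj q * P.coeff k + (1 - ‖conj q‖ ^ 2 : ℝ) * P.coeff 0 =
        (1 + ‖q‖ ^ 2 : ℝ) * P.coeff 0 := by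
      rw [hq, RCLike.norm_conj]
      push_cast
      rw [← Complex.conj_mul']
      ring
    rw [hvalue, norm_mul, Complex.norm_real, norm_of_nonneg (by positivity)] at hmobius
    calc ‖P.coeff 0‖ ^ 2 + ‖P.coeff k‖ ^ 2 / 2
      _ = (1 + 2 * ‖q‖ ^ 2) * ‖P.coeff 0‖ ^ 2 := by rw [hnorm]; ring
      _ ≤ ((1 + ‖q‖ ^ 2) * ‖P.coeff 0‖) ^ 2 := by
        rw [mul_pow]
        gcongr
        linarith [sq_nonneg (‖q‖ ^ 2), add_sq 1 (‖q‖ ^ 2)]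
      _ ≤ S ^ 2 := by gcongr
  · have hk_le : ‖P.coeff k‖ ≤ S := norm_coeff_le_circleAverage P k
    calc ‖P.coeff 0‖ ^ 2 + ‖P.coeff k‖ ^ 2 / 2
      _ ≤ ‖P.coeff k‖ ^ 2 := by nlinarith [norm_nonneg (P.coeff 0)]
      _ ≤ S ^ 2 := by gcongr

/-- The weight of the `k`-th coefficient in the `L²`–`L¹` inequality for polynomials of degree at
most `m`. It comes from averaging `‖a₀‖² + ‖aₖ‖² / 2 ≤ ‖P‖₁²` over `1 ≤ k ≤ m`. -/
noncomputable def degreeWeight (m k : ℕ) : ℝ := if k = 0 then 1 else (2 * m)⁻¹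

theorem sum_degreeWeight_mul_sq_norm_coeff_le (P : ℂ[X]) (m : ℕ) :
    ∑ k ∈ range (m + 1), degreeWeight m k * ‖P.coeff k‖ ^ 2 ≤
      circleAverage (fun z => ‖P.eval z‖) 0 1 ^ 2 := by
  simp only [sum_range_succ', degreeWeight, Nat.add_eq_zero_iff, one_ne_zero, and_false, if_false,
    if_true, one_mul, ← mul_sum]
  obtain rfl | hm := eq_or_ne m 0
  · simpa using pow_le_pow_left₀ (norm_nonneg _) (norm_coeff_le_circleAverage P 0) 2
  have hm0 : (0 : ℝ) < m := by positivity
  have h := sum_le_sum fun k (_ : k ∈ range m) =>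
    sq_norm_coeff_zero_add_half_sq_norm_coeff_le P k.succ_ne_zero
  simp only [sum_add_distrib, sum_const, card_range, nsmul_eq_mul, ← sum_div] at h
  refine le_of_mul_le_mul_left (le_of_eq_of_le ?_ h) hm0
  field_simp
  ring

end OneVariable

section Tensorization

open Polynomial Real

lemma sqrt_sum_mul_sq_circleAverage_le {κ : Type*} [Fintype κ] {w : κ → ℝ} (hw : ∀ k, 0 ≤ w k)
    {F : κ → ℂ → ℝ} (hF : ∀ k, Continuous (F k)) (c : ℂ) (R : ℝ) :
    √(∑ k, w k * circleAverage (F k) c R ^ 2) ≤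
      circleAverage (fun z => √(∑ k, w k * F k z ^ 2)) c R := by
  let u (z : ℂ) : EuclideanSpace ℝ κ := WithLp.toLp 2 fun k => √(w k) * F k z
  have hu : Continuous u := by fun_prop
  have hproj (k : κ) : circleAverage u c R k = √(w k) * circleAverage (F k) c R := by
    have h := (EuclideanSpace.proj (𝕜 := ℝ) k).circleAverage_comp_comm
      (hu.continuousOn.circleIntegrable' (c := c) (R := R))
    exact h.symm.trans (circleAverage_fun_smul (a := √(w k)) (f := F k))
  have h := norm_circleAverage_le u c R
  simpa only [EuclideanSpace.norm_eq, hproj, u, norm_eq_abs, sq_abs, mul_pow,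
    sq_sqrt (hw _)] using h

lemma sqrt_sum_mul_sum_degreeWeight_le {κ : Type*} [Fintype κ] (P : κ → ℂ[X]) {w : κ → ℝ}
    (hw : ∀ β, 0 ≤ w β) (m : ℕ) :
    √(∑ β, w β * ∑ k ∈ range (m + 1), degreeWeight m k * ‖(P β).coeff k‖ ^ 2) ≤
      circleAverage (fun z => √(∑ β, w β * ‖(P β).eval z‖ ^ 2)) 0 1 := by
  refine le_trans (sqrt_le_sqrt ?_)
    (sqrt_sum_mul_sq_circleAverage_le hw (fun β => (P β).continuous.norm) 0 1)
  gcongr with β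
  · exact hw β
  · exact sum_degreeWeight_mul_sq_norm_coeff_le (P β) m

lemma degreeWeight_nonneg (m k : ℕ) : 0 ≤ degreeWeight m k := by
  rw [degreeWeight]
  split_ifs <;> positivity

lemma prod_degreeWeight {ι : Type*} [Fintype ι] (m : ℕ) (α : ι → ℕ) :
    ∏ i, degreeWeight m (α i) = ((2 * m : ℝ) ^ #{i | α i ≠ 0})⁻¹ := by
  simp only [degreeWeight, prod_ite, prod_const, one_pow, one_mul, inv_pow]

theorem sum_sqrt_sum_prod_degreeWeight_le {J : Type*} [Fintype J] {m N : ℕ} {K : ℝ}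
    (a : J → (Fin N → Fin (m + 1)) → ℂ)
    (ha : ∀ z : Fin N → ℂ, (∀ i, ‖z i‖ = 1) → ∑ j, ‖∑ β, a j β * ∏ i, z i ^ (β i : ℕ)‖ ≤ K) :
    ∑ j, √(∑ β, (∏ i, degreeWeight m (β i)) * ‖a j β‖ ^ 2) ≤ K := by
  induction N with
  | zero => simpa using ha 0 fun i => i.elim0
  | succ N ih =>
    let P (j : J) (β : Fin N → Fin (m + 1)) : ℂ[X] :=
      ∑ k : Fin (m + 1), C (a j (Fin.cons k β)) * X ^ (k : ℕ)
    let G (j : J) (z : ℂ) : ℝ := √(∑ β, (∏ i, degreeWeight m (β i)) * ‖(P j β).eval z‖ ^ 2)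
    have hG (j : J) : Continuous (G j) := by fun_prop
    have hslice (z : ℂ) (hz : ‖z‖ = 1) : ∑ j, G j z ≤ K := by
      refine ih _ fun y hy => le_of_eq_of_le ?_ (ha (Fin.cons z y) (Fin.cases hz hy))
      refine sum_congr rfl fun j _ => congrArg _ ?_
      rw [sum_fin_succ_tuple, sum_comm]
      refine sum_congr rfl fun β _ => ?_
      simp only [P, eval_finsetSum, eval_mul, eval_C, eval_pow, eval_X, sum_mul,
        Fin.prod_univ_succ, Fin.cons_zero, Fin.cons_succ, mul_assoc]
    have hcoeff (j : J) (k : Fin (m + 1)) (β : Fin N → Fin (m + 1)) :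
        (P j β).coeff k = a j (Fin.cons k β) := by
      simp [P, finsetSum_coeff, coeff_C_mul, coeff_X_pow, Fin.val_inj]
    have hstep (j : J) :
        √(∑ β, (∏ i, degreeWeight m (β i)) * ‖a j β‖ ^ 2) ≤ circleAverage (G j) 0 1 := by
      refine le_of_eq_of_le (congrArg _ ?_) (sqrt_sum_mul_sum_degreeWeight_le (P j)
        (fun β => prod_nonneg fun i _ => degreeWeight_nonneg m (β i)) m)
      rw [sum_fin_succ_tuple, sum_comm]
      refine sum_congr rfl fun β _ => ?_
      rw [← Fin.sum_univ_eq_sum_range (fun k => degreeWeight m k * ‖(P j β).coeff k‖ ^ 2), mul_sum]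
      refine sum_congr rfl fun k _ => ?_
      rw [hcoeff, Fin.prod_univ_succ]
      simp only [Fin.cons_zero, Fin.cons_succ]
      ring
    calc ∑ j, √(∑ β, (∏ i, degreeWeight m (β i)) * ‖a j β‖ ^ 2)
      _ ≤ ∑ j, circleAverage (G j) 0 1 := sum_le_sum fun j _ => hstep j
      _ = circleAverage (fun z => ∑ j, G j z) 0 1 :=
        (circleAverage_fun_sum fun j _ => (hG j).continuousOn.circleIntegrable').symm
      _ ≤ K := circleAverage_mono_on_of_le_circle
        (continuous_finsetSum _ fun j _ => hG j).continuousOn.circleIntegrable'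
        fun z hz => hslice z (by simpa using hz)

lemma sum_ite_mem_comp_equiv {ι R : Type*} [Fintype ι] [AddCommMonoid R] {m N : ℕ} (e : ι ≃ Fin N)
    {Λ : Finset (ι → ℕ)} (hΛ : ∀ α ∈ Λ, ∀ i, α i ≤ m) (f : (ι → ℕ) → R) :
    ∑ β : Fin N → Fin (m + 1),
      (if (fun i => (β (e i) : ℕ)) ∈ Λ then f fun i => β (e i) else 0) = ∑ α ∈ Λ, f α := by
  rw [← sum_filter]
  refine sum_bij (fun β _ i => (β (e i) : ℕ)) (fun β hβ => (mem_filter.mp hβ).2)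
    (fun β _ γ _ h => funext fun i => Fin.ext ?_) (fun α hα => ?_) (fun _ _ => rfl)
  · simpa only [e.apply_symm_apply] using congrFun h (e.symm i)
  · refine ⟨fun i => ⟨α (e.symm i), Nat.lt_succ_of_le (hΛ α hα _)⟩, ?_, ?_⟩
    all_goals simp [hα]

theorem sum_sqrt_sum_sq_norm_le {ι J : Type*} [Fintype ι] [Fintype J] {m M : ℕ} (hm : m ≠ 0)
    {K : ℝ} {Λ : Finset (ι → ℕ)} (hdeg : ∀ α ∈ Λ, ∀ i, α i ≤ m)
    (hvar : ∀ α ∈ Λ, #{i | α i ≠ 0} ≤ M) (a : J → (ι → ℕ) → ℂ)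
    (ha : ∀ z : ι → ℂ, (∀ i, ‖z i‖ = 1) → ∑ j, ‖∑ α ∈ Λ, a j α * ∏ i, z i ^ α i‖ ≤ K) :
    ∑ j, √(∑ α ∈ Λ, ‖a j α‖ ^ 2) ≤ √((2 * m) ^ M) * K := by
  have hm1 : (1 : ℝ) ≤ 2 * m := by
    have : (1 : ℝ) ≤ m := by exact_mod_cast Nat.one_le_iff_ne_zero.mpr hm
    linarith
  have hweight {α} (hα : α ∈ Λ) : ((2 * m : ℝ) ^ M)⁻¹ ≤ ∏ i, degreeWeight m (α i) := by
    rw [prod_degreeWeight]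
    gcongr
    exact hvar α hα
  have hweighted : ∑ j, √(∑ α ∈ Λ, (∏ i, degreeWeight m (α i)) * ‖a j α‖ ^ 2) ≤ K := by
    let e := Fintype.equivFin ι
    convert sum_sqrt_sum_prod_degreeWeight_le (m := m) (K := K)
      (fun j β => if (fun i => (β (e i) : ℕ)) ∈ Λ then a j fun i => β (e i) else 0)
      (fun z hz => le_of_eq_of_le ?_ (ha (z ∘ e) fun i => hz (e i))) with j
    · rw [← sum_ite_mem_comp_equiv e hdeg]
      refine sum_congr rfl fun β _ => ?_
      rw [e.prod_comp fun i => degreeWeight m (β i)]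
      split_ifs <;> simp
    · refine sum_congr rfl fun j _ => congrArg _ ?_
      rw [← sum_ite_mem_comp_equiv e hdeg]
      refine sum_congr rfl fun β _ => ?_
      rw [ite_mul, zero_mul]
      congr 2
      exact (e.prod_comp fun i => z i ^ (β i : ℕ)).symm
  calc ∑ j, √(∑ α ∈ Λ, ‖a j α‖ ^ 2)
    _ = √((2 * m) ^ M) * ∑ j, √(∑ α ∈ Λ, ((2 * m : ℝ) ^ M)⁻¹ * ‖a j α‖ ^ 2) := by
      rw [mul_sum]
      refine sum_congr rfl fun j _ => ?_
      rw [← mul_sum, ← sqrt_mul (by positivity), mul_inv_cancel_left₀ (by positivity)]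
    _ ≤ √((2 * m) ^ M) * ∑ j, √(∑ α ∈ Λ, (∏ i, degreeWeight m (α i)) * ‖a j α‖ ^ 2) := by
      gcongr with j _ α hα
      exact hweight hα
    _ ≤ √((2 * m) ^ M) * K := by gcongr

end Tensorization

section Derivative

variable {ι : Type*} [Fintype ι] {m : ℕ} {Λ : Finset (ι → ℕ)} {c : (ι → ℕ) → ℂ} {K : ℝ}

lemma norm_sum_mul_prod_pow_le_pow_mul (hΛ : ∀ α ∈ Λ, ∑ j, α j = m)
    (hK : ∀ z : ι → ℂ, (∀ j, ‖z j‖ ≤ 1) → ‖∑ α ∈ Λ, c α * ∏ j, z j ^ α j‖ ≤ K)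
    {R : ℝ} (hR : 0 < R) {z : ι → ℂ} (hz : ∀ j, ‖z j‖ ≤ R) :
    ‖∑ α ∈ Λ, c α * ∏ j, z j ^ α j‖ ≤ R ^ m * K := by
  have hscale : ∑ α ∈ Λ, c α * ∏ j, z j ^ α j =
      (R : ℂ) ^ m * ∑ α ∈ Λ, c α * ∏ j, (z j / R) ^ α j := by
    rw [mul_sum]
    refine sum_congr rfl fun α hα => ?_
    rw [← hΛ α hα, ← prod_pow_eq_pow_sum, mul_left_comm, ← prod_mul_distrib]
    simp only [← mul_pow, mul_div_cancel₀ _ (Complex.ofReal_ne_zero.mpr hR.ne')]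
  rw [hscale, norm_mul, norm_pow, Complex.norm_real, Real.norm_of_nonneg hR.le]
  gcongr
  refine hK _ fun j => ?_
  rw [norm_div, Complex.norm_real, Real.norm_of_nonneg hR.le]
  exact div_le_one_of_le₀ (hz j) hR.le

lemma hasDerivAt_prod_mul_one_add_mul_pow (w u : ι → ℂ) (α : ι → ℕ) :
    HasDerivAt (fun t => ∏ j, (w j * (1 + t * u j)) ^ α j)
      (∑ j, α j * u j * ∏ i, w i ^ α i) 0 := by
  classical
  have hfactor (j : ι) : HasDerivAt (fun t => (w j * (1 + t * u j)) ^ α j)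
      (α j * (w j * (1 + 0 * u j)) ^ (α j - 1) * (w j * (1 * u j))) 0 :=
    ((((hasDerivAt_id 0).mul_const (u j)).const_add 1).const_mul (w j)).fun_pow (α j)
  refine (HasDerivAt.fun_finsetProd fun j _ => hfactor j).congr_deriv (sum_congr rfl fun j _ => ?_)
  rw [← mul_prod_erase univ _ (mem_univ j)]
  simp only [zero_mul, add_zero, mul_one, one_mul, smul_eq_mul]
  obtain hj | hj := eq_or_ne (α j) 0
  · simp only [hj, Nat.cast_zero, zero_mul, mul_zero]
  · rw [← pow_sub_one_mul hj (w j)]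
    ring

lemma norm_sum_mul_sum_le (hm : m ≠ 0) (hΛ : ∀ α ∈ Λ, ∑ j, α j = m)
    (hK : ∀ z : ι → ℂ, (∀ j, ‖z j‖ ≤ 1) → ‖∑ α ∈ Λ, c α * ∏ j, z j ^ α j‖ ≤ K)
    {w u : ι → ℂ} (hw : ∀ j, ‖w j‖ ≤ 1) (hu : ∀ j, ‖u j‖ ≤ 1) :
    ‖∑ α ∈ Λ, c α * ∑ j, α j * u j * ∏ i, w i ^ α i‖ ≤ m * (Real.exp 1 * K) := by
  have hm0 : (0 : ℝ) < m := by positivity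
  have hK0 : 0 ≤ K := (norm_nonneg _).trans (hK 0 (by simp))
  let φ (t : ℂ) : ℂ := ∑ α ∈ Λ, c α * ∏ j, (w j * (1 + t * u j)) ^ α j
  have hφ : HasDerivAt φ (∑ α ∈ Λ, c α * ∑ j, α j * u j * ∏ i, w i ^ α i) 0 :=
    HasDerivAt.fun_sum fun α _ => (hasDerivAt_prod_mul_one_add_mul_pow w u α).const_mul (c α)
  have hdiff : Differentiable ℂ φ := by fun_prop
  have hbound : ∀ t ∈ Metric.sphere (0 : ℂ) (1 / m), ‖φ t‖ ≤ (1 / m + 1) ^ m * K := by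
    refine fun t ht => norm_sum_mul_prod_pow_le_pow_mul hΛ hK (by positivity) fun j => ?_
    have ht : ‖t‖ = 1 / m := by simpa using ht
    calc ‖w j * (1 + t * u j)‖
      _ ≤ ‖1 + t * u j‖ := by
        rw [norm_mul]
        exact mul_le_of_le_one_left (norm_nonneg _) (hw j)
      _ ≤ ‖(1 : ℂ)‖ + ‖t‖ * ‖u j‖ := (norm_add_le _ _).trans_eq (by rw [norm_mul])
      _ ≤ 1 / m + 1 := by
        rw [norm_one, ht, add_comm]
        gcongr
        exact mul_le_of_le_one_right (by positivity) (hu j)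
  calc ‖∑ α ∈ Λ, c α * ∑ j, α j * u j * ∏ i, w i ^ α i‖
    _ ≤ (1 / m + 1) ^ m * K / (1 / m) := by
      rw [← hφ.deriv]
      exact Complex.norm_deriv_le_of_forall_mem_sphere_norm_le (by positivity)
        hdiff.diffContOnCl hbound
    _ = m * ((1 / m + 1) ^ m * K) := by rw [div_div_eq_mul_div, div_one, mul_comm]
    _ ≤ m * (Real.exp (1 / m) ^ m * K) := by
      gcongr
      exact Real.add_one_le_exp _
    _ = m * (Real.exp 1 * K) := by rw [← Real.exp_nat_mul, mul_one_div_cancel hm0.ne']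

theorem sum_norm_sum_div_mul_le (hm : m ≠ 0) (hΛ : ∀ α ∈ Λ, ∑ j, α j = m)
    (hK : ∀ z : ι → ℂ, (∀ j, ‖z j‖ ≤ 1) → ‖∑ α ∈ Λ, c α * ∏ j, z j ^ α j‖ ≤ K)
    {w : ι → ℂ} (hw : ∀ j, ‖w j‖ ≤ 1) :
    ∑ j, ‖∑ α ∈ Λ, α j / m * c α * ∏ i, w i ^ α i‖ ≤ Real.exp 1 * K := by
  have hmC : (m : ℂ) ≠ 0 := Nat.cast_ne_zero.mpr hm
  choose u hu hphase using fun j =>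
    Complex.exists_norm_eq_mul_self (∑ α ∈ Λ, α j / m * c α * ∏ i, w i ^ α i)
  have hsum : m * ((∑ j, ‖∑ α ∈ Λ, α j / m * c α * ∏ i, w i ^ α i‖ : ℝ) : ℂ) =
      ∑ α ∈ Λ, c α * ∑ j, α j * u j * ∏ i, w i ^ α i := by
    rw [Complex.ofReal_sum, sum_congr rfl fun j _ => hphase j]
    simp only [mul_sum]
    rw [sum_comm]
    refine sum_congr rfl fun α _ => sum_congr rfl fun j _ => ?_
    field_simp
  have h := norm_sum_mul_sum_le hm hΛ hK hw fun j => (hu j).le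
  rw [← hsum, norm_mul, Complex.norm_natCast, Complex.norm_real,
    Real.norm_of_nonneg (sum_nonneg fun _ _ => norm_nonneg _)] at h
  exact le_of_mul_le_mul_left h (by positivity)

end Derivative

section BohnenblustHille

variable {ι : Type*} [Fintype ι] {m M : ℕ} {Λ : Finset (ι → ℕ)}

lemma norm_le_biSup_polydisc (Λ : Finset (ι → ℕ)) (c : (ι → ℕ) → ℂ) {z : ι → ℂ}
    (hz : ∀ j, ‖z j‖ ≤ 1) :
    ‖∑ α ∈ Λ, c α * ∏ j, z j ^ α j‖ ≤
      ⨆ z ∈ {z : ι → ℂ | ∀ j, ‖z j‖ ≤ 1}, ‖∑ α ∈ Λ, c α * ∏ j, z j ^ α j‖ := by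
  have hbound {z : ι → ℂ} (hz : ∀ j, ‖z j‖ ≤ 1) :
      ‖∑ α ∈ Λ, c α * ∏ j, z j ^ α j‖ ≤ ∑ α ∈ Λ, ‖c α‖ := by
    refine norm_sum_le_of_le Λ fun α _ => ?_
    rw [norm_mul, norm_prod]
    refine mul_le_of_le_one_right (norm_nonneg _) (prod_le_one (fun _ _ => norm_nonneg _) ?_)
    intro j _
    rw [norm_pow]
    exact pow_le_one₀ (norm_nonneg _) (hz j)
  refine le_ciSup_of_le ⟨∑ α ∈ Λ, ‖c α‖, ?_⟩ z
    (le_ciSup (f := fun _ : ∀ j, ‖z j‖ ≤ 1 => _) (Set.finite_range _).bddAbove hz)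
  rintro _ ⟨z, rfl⟩
  exact Real.iSup_le hbound (sum_nonneg fun _ _ => norm_nonneg _)

lemma sum_sqrt_sum_div_mul_sq_le (m : ℕ) (Λ : Finset (ι → ℕ)) (b : (ι → ℕ) → ℝ) :
    ∑ j, √(∑ α ∈ Λ, α j / m * b α ^ 2) ≤ √m * ∑ j, √(∑ α ∈ Λ, (α j / m * b α) ^ 2) := by
  rw [mul_sum]
  refine sum_le_sum fun j _ => ?_
  rw [← Real.sqrt_mul (by positivity), mul_sum]
  refine Real.sqrt_le_sqrt (sum_le_sum fun α _ => ?_)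
  calc α j / m * b α ^ 2
    _ ≤ (α j : ℝ) ^ 2 / m * b α ^ 2 := by
      gcongr
      exact_mod_cast Nat.le_self_pow two_ne_zero (α j)
    _ = m * (α j / m * b α) ^ 2 := by
      obtain rfl | hm := eq_or_ne m 0
      · simp
      · field_simp

lemma sqrt_mul_sqrt_two_mul_pow (m M : ℕ) :
    √m * √((2 * m) ^ M) = 2 ^ (M / 2 : ℝ) * (m : ℝ) ^ ((M + 1) / 2 : ℝ) := by
  rw [mul_pow, Real.sqrt_mul (by positivity), mul_left_comm, ← Real.sqrt_mul (by positivity),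
    ← pow_succ', Real.sqrt_eq_rpow, Real.sqrt_eq_rpow, ← Real.rpow_natCast, ← Real.rpow_natCast,
    ← Real.rpow_mul (by positivity), ← Real.rpow_mul (by positivity), mul_one_div, mul_one_div,
    Nat.cast_succ]

theorem bohnenblust_hille_bounded_vars_general (hm : m ≠ 0) (hΛ : ∀ α ∈ Λ, ∑ j, α j = m)
    (hvar : ∀ α ∈ Λ, #{j | α j ≠ 0} ≤ M) (c : (ι → ℕ) → ℂ) :
    (∑ α ∈ Λ, ‖c α‖ ^ (2 * m / (m + 1) : ℝ)) ^ ((m + 1) / (2 * m) : ℝ) ≤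
      Real.exp 1 * 2 ^ (M / 2 : ℝ) * (m : ℝ) ^ ((M + 1) / 2 : ℝ) *
        ⨆ z ∈ {z : ι → ℂ | ∀ j, ‖z j‖ ≤ 1}, ‖∑ α ∈ Λ, c α * ∏ j, z j ^ α j‖ := by
  set K := ⨆ z ∈ {z : ι → ℂ | ∀ j, ‖z j‖ ≤ 1}, ‖∑ α ∈ Λ, c α * ∏ j, z j ^ α j‖
  have hdeg : ∀ α ∈ Λ, ∀ i, α i ≤ m := fun α hα i =>
    (single_le_sum_of_canonicallyOrdered (mem_univ i)).trans_eq (hΛ α hα)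
  have hderiv (z : ι → ℂ) (hz : ∀ i, ‖z i‖ = 1) :
      ∑ j, ‖∑ α ∈ Λ, α j / m * c α * ∏ i, z i ^ α i‖ ≤ Real.exp 1 * K :=
    sum_norm_sum_div_mul_le hm hΛ (fun _ => norm_le_biSup_polydisc Λ c) fun i => (hz i).le
  calc (∑ α ∈ Λ, ‖c α‖ ^ (2 * m / (m + 1) : ℝ)) ^ ((m + 1) / (2 * m) : ℝ)
    _ ≤ ∑ j, √(∑ α ∈ Λ, α j / m * ‖c α‖ ^ 2) :=
      rpow_sum_rpow_le_sum_sqrt hm hΛ fun _ => norm_nonneg _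
    _ ≤ √m * ∑ j, √(∑ α ∈ Λ, (α j / m * ‖c α‖) ^ 2) := sum_sqrt_sum_div_mul_sq_le m Λ _
    _ = √m * ∑ j, √(∑ α ∈ Λ, ‖α j / m * c α‖ ^ 2) := by
      simp only [norm_mul, norm_div, Complex.norm_natCast]
    _ ≤ √m * (√((2 * m) ^ M) * (Real.exp 1 * K)) := by
      gcongr
      exact sum_sqrt_sum_sq_norm_le hm hdeg hvar _ hderiv
    _ = Real.exp 1 * 2 ^ (M / 2 : ℝ) * (m : ℝ) ^ ((M + 1) / 2 : ℝ) * K := by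
      rw [← mul_assoc, sqrt_mul_sqrt_two_mul_pow]
      ring

end BohnenblustHille

/-- **Bohnenblust–Hille inequality with polynomial growth in `m`** for polynomials
whose monomials involve at most `M` variables. With
`Λ_{N,M} = {α ∈ ℕ₀^N : |α| = m, var(α) ≤ M}`:
`(∑_{α ∈ Λ_{N,M}} |c_α|^{2m/(m+1)})^{(m+1)/(2m)}
  ≤ e · 2^{M/2} m^{(M+1)/2} · sup_{polydisc} |∑_{α ∈ Λ_{N,M}} c_α z^α|`. -/
theorem bohnenblust_hille_bounded_vars (m M N : ℕ) (hm : 2 ≤ m) (hM : 1 ≤ M) (hN : 1 ≤ N)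
    (c : (Fin N → ℕ) → ℂ) :
    (∑ α ∈ (Finset.Nat.antidiagonalTuple N m).filter
          (fun α => (Finset.univ.filter fun j => α j ≠ 0).card ≤ M),
        ‖c α‖ ^ ((2 * m : ℝ) / (m + 1))) ^ (((m : ℝ) + 1) / (2 * m))
      ≤ Real.exp 1 * 2 ^ ((M : ℝ) / 2) * (m : ℝ) ^ (((M : ℝ) + 1) / 2) *
        ⨆ z ∈ {z : Fin N → ℂ | ∀ j, ‖z j‖ ≤ 1},
          ‖∑ α ∈ (Finset.Nat.antidiagonalTuple N m).filter
              (fun α => (Finset.univ.filter fun j => α j ≠ 0).card ≤ M),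
            c α * ∏ j, z j ^ α j‖ :=
  bohnenblust_hille_bounded_vars_general (by omega)
    (fun _ hα => Nat.mem_antidiagonalTuple.mp (mem_filter.mp hα).1)
    (fun _ hα => (mem_filter.mp hα).2) c
end
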